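/- On the event E, under Condition (H) in the sparse-unlearnable regime, suppose the maximum shifted noise coefficient satisfies ρ̂_max^{(t)} ≤ C_1/((mP)^{1/3} σ_n² d). Then the one-step dynamics satisfy both ρ̂_max^{(t+1)} ≥ ρ̂_max^{(t)} + (η σ_n⁴ d² / (3N(1+exp(4C_1³))))·(ρ̂_max^{(t)})² and ρ̂_max^{(t+1)} ≤ ρ̂_max^{(t)} + (4800 η σ_n⁴ d² log(16NmP/δ)/N)·(ρ̂_max^{(t)})². -/

import Mathlib

open Finset MeasureTheory ProbabilityTheory
open scoped ENNReal NNReal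

noncomputable section

namespace AD

/-- Cubic ReLU activation. -/
def phi (z : ℝ) : ℝ := (max 0 z) ^ 3

/-- Negative sigmoid `ψ(z) = 1/(1+e^z)`. -/
def psi (z : ℝ) : ℝ := 1 / (1 + Real.exp z)

/-- Logistic loss `ℓ(z) = log(1+e^{-z})`. -/
def lloss (z : ℝ) : ℝ := Real.log (1 + Real.exp (-z))

/-- Logistic sigmoid `σ(z) = 1/(1+e^{-z})`. -/
def sigm (z : ℝ) : ℝ := 1 / (1 + Real.exp (-z))

/-- Euclidean inner product on `Fin d → ℝ`. -/
def dot {d : ℕ} (a b : Fin d → ℝ) : ℝ := ∑ k, a k * b k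

/-- Squared Euclidean norm. -/
def sqnorm {d : ℕ} (a : Fin d → ℝ) : ℝ := dot a a

/-- First standard basis vector `e₁` (the learnable feature `u`). -/
def e1 (d : ℕ) (hd : 0 < d) : Fin d → ℝ := fun k => if k = (⟨0, hd⟩ : Fin d) then 1 else 0

/-- Last standard basis vector `e_d` (the unlearnable feature `v`). -/
def eLast (d : ℕ) (_hd : 0 < d) : Fin d → ℝ := fun k => if (k : ℕ) = d - 1 then 1 else 0

/-- The two-layer student network
`f_W(X) = ∑_r ∑_p [φ(⟨w_r,x_p⟩) − φ(−⟨w_r,x_p⟩)]`. -/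
def netOut {m P d : ℕ} (w : Fin m → Fin d → ℝ) (X : Fin P → Fin d → ℝ) : ℝ :=
  ∑ r, ∑ p, (phi (dot (w r) (X p)) - phi (-(dot (w r) (X p))))

/-- The concentration event `E` of the paper, i.e. properties (P1)–(P8), stated for
training patches `x`, initialization `w0`, labels `y` and signal-patch indices `sig`. -/
def EventEOn (N m P d : ℕ) (hd : 0 < d) (sigman sigma0 delta : ℝ)
    (y : Fin N → ℝ) (sig : Fin N → Fin P)
    (x : Fin N → Fin P → Fin d → ℝ) (w0 : Fin m → Fin d → ℝ) : Prop :=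
  -- (P1) noise-patch norms
  (∀ i j, j ≠ sig i →
      sigman ^ 2 * d / 2 ≤ sqnorm (x i j) ∧ sqnorm (x i j) ≤ 3 * sigman ^ 2 * d / 2) ∧
  -- (P2) pairwise noise inner products
  (∀ i k j q, j ≠ sig i → q ≠ sig k → ((i, j) : Fin N × Fin P) ≠ (k, q) →
      |dot (x i j) (x k q)| ≤
        2 * sigman ^ 2 * Real.sqrt ((d : ℝ) * Real.log ((16 : ℝ) * N ^ 2 * P ^ 2 / delta))) ∧
  -- (P3) sup-norm of noise patches
  (∀ i j, j ≠ sig i → ∀ kk : Fin d,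
      |x i j kk| ≤ sigman * Real.sqrt (2 * Real.log ((16 : ℝ) * d * N * P / delta))) ∧
  -- (P4) initialization norms
  (∀ r, Real.sqrt (sqnorm (w0 r)) ≤ 2 * sigma0 * Real.sqrt d) ∧
  -- (P5) initialization signal correlation
  (∀ r, |dot (w0 r) (e1 d hd)| ≤ sigma0 * Real.sqrt (2 * Real.log ((16 : ℝ) * m / delta))) ∧
  -- (P6) initialization noise correlations
  (∀ r i j, j ≠ sig i →
      |dot (w0 r) (x i j)| ≤
        2 * sigma0 * sigman * Real.sqrt ((d : ℝ) * Real.log ((16 : ℝ) * N * m * P / delta))) ∧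
  -- (P7) maximal initial signal alignment
  (∃ r, sigma0 / 2 ≤ dot (w0 r) (e1 d hd)) ∧
  -- (P8) maximal initial noise alignment
  (∀ i j, j ≠ sig i → ∃ r, sigma0 * sigman * Real.sqrt d / 4 ≤ y i * dot (w0 r) (x i j))
structure Setting where
  N : ℕ
  m : ℕ
  P : ℕ
  d : ℕ
  T : ℕ
  hN : 0 < N
  hm : 0 < m
  hP : 0 < P
  hd : 0 < d
  alpha : ℝ
  sigman : ℝ
  sigma0 : ℝ
  eta : ℝ
  eps : ℝ
  delta : ℝ
  halpha : 0 < alpha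
  hsigman : 0 < sigman
  hsigma0 : 0 < sigma0
  heta : 0 < eta
  heps : 0 < eps
  hepsalpha : eps < alpha
  hdelta0 : 0 < delta
  hdelta1 : delta < 1
  /-- labels -/
  y : Fin N → ℝ
  hy : ∀ i, y i = 1 ∨ y i = -1
  /-- signal patch index -/
  sig : Fin N → Fin P
  /-- learnable samples -/
  SL : Finset (Fin N)
  /-- unlearnable samples -/
  SU : Finset (Fin N)
  hunion : SL ∪ SU = Finset.univ
  hdisj : Disjoint SL SU
  /-- training patches -/
  x : Fin N → Fin P → Fin d → ℝ
  hsigL : ∀ i ∈ SL, x i (sig i) = (alpha * y i) • e1 d hd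
  hsigU : ∀ i ∈ SU, x i (sig i) = (alpha * y i) • eLast d hd
  hnoiseU : ∀ i j, j ≠ sig i → dot (x i j) (e1 d hd) = 0
  hnoiseV : ∀ i j, j ≠ sig i → dot (x i j) (eLast d hd) = 0
  /-- weight trajectory -/
  w : ℕ → Fin m → Fin d → ℝ
  hwperp : ∀ t r, dot (w t r) (eLast d hd) = 0
  /-- adversarial training examples at each iteration -/
  xadv : ℕ → Fin N → Fin P → Fin d → ℝ
  hadvnoise : ∀ t i j, j ≠ sig i → xadv t i j = x i j
  hadvspan : ∀ t i, ∃ c : ℝ, xadv t i (sig i) - x i (sig i) = c • x i (sig i)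
  hadvlinf : ∀ t i p k, |xadv t i p k - x i p k| ≤ eps
  hadvlearn : ∀ t : ℕ, ∀ i ∈ SL,
    alpha - eps ≤ y i * dot (xadv t i (sig i)) (e1 d hd) ∧
      y i * dot (xadv t i (sig i)) (e1 d hd) ≤ alpha

namespace Setting

variable (S : Setting)

/-- Adversarial margin `y_i f_{W^{(t)}}(X̃_i^{(t)})`. -/
def marg (t : ℕ) (i : Fin S.N) : ℝ := S.y i * netOut (S.w t) (S.xadv t i)

/-- Signal coordinate `w_{r,1}^{(t)}`. -/
def wsig (t : ℕ) (r : Fin S.m) : ℝ := S.w t r ⟨0, S.hd⟩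

/-- Unlearnable fraction `p_un = |S_U|/N`. -/
def pun : ℝ := (S.SU.card : ℝ) / S.N

/-- The adversarial-training gradient-descent dynamics. -/
def ATDyn : Prop :=
  ∀ t r, S.w (t + 1) r = S.w t r +
    (3 * S.eta / S.N) •
      ∑ i : Fin S.N, (psi (S.marg t i) * S.y i) •
        ∑ p : Fin S.P, (dot (S.w t r) (S.xadv t i p)) ^ 2 • S.xadv t i p

/-- The signed gradient weight of sample `i` at iteration `t` under adversarial
distillation from teacher logits `fT`. -/
def gAD (fT : Fin S.N → ℝ) (t : ℕ) (i : Fin S.N) : ℝ :=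
  sigm (S.y i * fT i) * psi (S.marg t i) - sigm (-(S.y i * fT i)) * psi (-(S.marg t i))

/-- The adversarial-distillation gradient-descent dynamics. -/
def ADDyn (fT : Fin S.N → ℝ) : Prop :=
  ∀ t r, S.w (t + 1) r = S.w t r +
    (3 * S.eta / S.N) •
      ∑ i : Fin S.N, (S.gAD fT t i * S.y i) •
        ∑ p : Fin S.P, (dot (S.w t r) (S.xadv t i p)) ^ 2 • S.xadv t i p

/-- Noise coefficients `ρ_{i,j,r}^{(t)}` (adversarial training). -/
def rho (i : Fin S.N) (j : Fin S.P) (r : Fin S.m) : ℕ → ℝ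
  | 0 => 0
  | t + 1 => rho i j r t + (3 * S.eta / S.N) * psi (S.marg t i) * (dot (S.w t r) (S.x i j)) ^ 2

/-- Noise coefficients under adversarial distillation. -/
def rhoAD (fT : Fin S.N → ℝ) (i : Fin S.N) (j : Fin S.P) (r : Fin S.m) : ℕ → ℝ
  | 0 => 0
  | t + 1 => rhoAD fT i j r t + (3 * S.eta / S.N) * S.gAD fT t i * (dot (S.w t r) (S.x i j)) ^ 2

/-- The event `E` for a setting. -/
def EventE : Prop :=
  EventEOn S.N S.m S.P S.d S.hd S.sigman S.sigma0 S.delta S.y S.sig S.x (S.w 0)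

/-- Condition (H): the parameter requirements of Condition 4.1 of the paper
(without the unlearnable-fraction regime item, which is imposed separately). -/
def CondH (C : ℝ) : Prop :=
  1 ≤ C ∧
  -- training horizon
  C * S.N / (S.eta * S.sigma0 * S.sigman ^ 3 * ((S.d : ℝ) * Real.sqrt S.d)) ≤ (S.T : ℝ) ∧
  -- dimension
  C * S.m ^ 2 * S.P ^ 2 * S.N ^ 2 *
      (Real.log ((S.T : ℝ) * S.N * S.m * S.P / S.delta)) ^ 4 ≤ (S.d : ℝ) ∧
  -- signal strength
  C * S.sigman * Real.sqrt S.d * Real.log ((S.T : ℝ) * S.N * S.m * S.P / S.delta) /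
      (((S.N : ℝ) * (1 - S.pun)) ^ ((1 : ℝ) / 3)) ≤ S.alpha ∧
  -- initialization scale
  S.sigma0 ≤
    C⁻¹ *
        min (min (1 / ((S.m : ℝ) ^ ((2 : ℝ) / 3) * (S.P : ℝ) ^ ((2 : ℝ) / 3) *
            S.sigman * Real.sqrt S.d))
          (1 / (S.alpha * (S.m : ℝ) ^ ((2 : ℝ) / 3))))
          (1 / (S.sigman * S.m ^ 2 * Real.sqrt S.P * S.d)) /
      Real.log ((S.T : ℝ) * S.d * S.N * S.m * S.P / S.delta) ∧
  -- learning rate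
  S.eta ≤
    C⁻¹ * min (min (1 / (S.alpha ^ 3 * S.sigma0)) (1 / (S.sigman ^ 2 * S.d))) (1 / S.alpha ^ 2) /
      Real.log ((S.T : ℝ) * S.N * S.m * S.P / S.delta) ∧
  -- adversarial budget
  C * S.sigman * S.m * Real.sqrt S.P * Real.log ((S.T : ℝ) * S.d * S.N * S.P / S.delta) ≤ S.eps ∧
  S.eps < C⁻¹ * min S.alpha (1 / (S.m * S.sigma0 * S.d)) ∧
  -- width and number of patches
  C * Real.log ((S.N : ℝ) * S.P / S.delta) ≤ (S.m : ℝ) ∧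
  (S.m : ℝ) ≤ C * Real.log S.d ^ C ∧
  2 ≤ S.P ∧ (S.P : ℝ) ≤ C

/-- The sparse-unlearnable regime of Condition 4.1. -/
def SparseRegime (C : ℝ) : Prop :=
  C / S.N ≤ S.pun ∧ S.pun ≤ C⁻¹ * Real.log S.d / S.N ∧
  C * S.m * S.P * Real.log ((S.T : ℝ) * S.d * S.N * S.m * S.P / S.delta) ≤ (S.N : ℝ)

/-- The noise-stability bound (NS) on learnable samples at iteration `t`. -/
def NS (t : ℕ) : Prop :=
  ∀ r : Fin S.m, ∀ i ∈ S.SL, ∀ j, j ≠ S.sig i →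
    |dot (S.w t r) (S.x i j)| ≤
      3 * S.sigma0 * S.sigman *
          Real.sqrt ((S.d : ℝ) * Real.log ((16 : ℝ) * S.N * S.m * S.P / S.delta)) +
        21 * S.pun * S.N * S.P * Real.log S.T ^ ((1 : ℝ) / 3) / Real.sqrt S.d *
          Real.sqrt (Real.log ((16 : ℝ) * S.N ^ 2 * S.P ^ 2 / S.delta))

/-- The signal-learning hitting time `T₀`. -/
def T0 (C0 : ℝ) : ℕ :=
  sInf {t : ℕ | ∃ r, C0 / (S.alpha * (S.m : ℝ) ^ ((1 : ℝ) / 3)) < S.wsig t r}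

/-- Maximum of the noise coefficients over unlearnable noise patches. -/
def rhoMaxSU (t : ℕ) : ℝ :=
  sSup {z : ℝ | ∃ r : Fin S.m, ∃ k ∈ S.SU, ∃ q, q ≠ S.sig k ∧ z = S.rho k q r t}

/-- Shifted noise coefficients `ρ̂_{i,j,r}^{(t)}`. -/
def rhoHat (i : Fin S.N) (j : Fin S.P) (r : Fin S.m) (t : ℕ) : ℝ :=
  S.rho i j r t + S.y i * dot (S.w 0 r) (S.x i j) / sqnorm (S.x i j)

/-- Maximum shifted noise coefficient over unlearnable noise patches. -/
def rhoHatMax (t : ℕ) : ℝ :=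
  sSup {z : ℝ | ∃ r : Fin S.m, ∃ k ∈ S.SU, ∃ q, q ≠ S.sig k ∧ z = S.rhoHat k q r t}

/-- The noise-memorization hitting time `T₁`. -/
def T1 (C1 : ℝ) : ℕ :=
  sInf {t : ℕ | C1 / (((S.m : ℝ) * S.P) ^ ((1 : ℝ) / 3) * S.sigman ^ 2 * S.d) < S.rhoHatMax t}

/-- The Good-Teacher horizon `T_max`. -/
def Tmax : ℝ :=
  S.N / (1000 * S.eta * S.m * S.P * S.sigma0 ^ 4 * S.sigman ^ 6 * (S.d : ℝ) ^ 3 *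
    Real.log ((16 : ℝ) * S.N * S.m * S.P / S.delta) ^ 2)

end Setting

/-!
The activation is `φ(z) - φ(-z) = z ^ 3`, and the weights stay orthogonal to the unlearnable
signal, so an unlearnable sample is fitted through its noise patches alone. Distinct noise patches
being nearly orthogonal, the correlation of a neuron with a noise patch `x` is `‖x‖ ^ 2` times the
shifted coefficient up to a crosstalk term, and the update of the coefficient is then quadratic in
the coefficient itself. The upper bound uses `ψ ≤ 1`; for the lower one, the margin of an
unlearnable sample is at most `4 * C₁ ^ 3` below the threshold, hence
`ψ ≥ 1 / (1 + exp (4 * C₁ ^ 3))`.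

The crosstalk is small because the learnable samples, which are by far the most numerous, memorize
little noise: they are fitted through the signal first. The signal coordinate `w` of the leading
neuron satisfies `w ↦ w + g * w ^ 2`, whose explosion bounds the sum of the rates `g`, and `g`
dominates the update rate of the noise coefficients of every learnable sample. Before `w` reaches
the level at which margins are of constant order, the noise has no time to leave its
initialization scale; afterwards the remaining rates sum to `O(α * m ^ (1 / 3))`. Both estimates
assume the conclusion at earlier iterations, so the argument is a strong induction.
-/

/-! ### Scalar inequalities -/

lemma phi_sub_phi_neg (z : ℝ) : phi z - phi (-z) = z ^ 3 := by
  unfold phi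
  rcases le_total 0 z with h | h
  · rw [max_eq_right h, max_eq_left (by linarith)]; ring
  · rw [max_eq_left h, max_eq_right (by linarith)]; ring

lemma psi_eq_sigmoid (z : ℝ) : psi z = Real.sigmoid (-z) := by
  rw [psi, Real.sigmoid, neg_neg, one_div]

lemma psi_nonneg (z : ℝ) : 0 ≤ psi z :=
  psi_eq_sigmoid z ▸ Real.sigmoid_nonneg _

lemma psi_le_one (z : ℝ) : psi z ≤ 1 :=
  psi_eq_sigmoid z ▸ Real.sigmoid_le_one _

lemma psi_antitone : Antitone psi := fun x y h => by
  simpa only [psi_eq_sigmoid] using Real.sigmoid_le (neg_le_neg h)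

lemma psi_le_exp_neg (z : ℝ) : psi z ≤ Real.exp (-z) := by
  rw [psi, Real.exp_neg, one_div]
  gcongr
  linarith

lemma rpow_third_pow_three {a : ℝ} (ha : 0 ≤ a) : (a ^ ((1 : ℝ) / 3)) ^ 3 = a := by
  simpa only [one_div, Nat.cast_ofNat] using Real.rpow_inv_natCast_pow ha three_ne_zero

lemma mul_pow_three_le_of_rpow_third_mul_le {a z c : ℝ} (ha : 0 ≤ a)
    (h : a ^ ((1 : ℝ) / 3) * z ≤ c) : a * z ^ 3 ≤ c ^ 3 := by
  calc a * z ^ 3 = (a ^ ((1 : ℝ) / 3) * z) ^ 3 := by rw [mul_pow, rpow_third_pow_three ha]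
    _ ≤ c ^ 3 := (Odd.pow_le_pow (by decide)).2 h

lemma rpow_third_sq_le {a : ℝ} (ha : 1 ≤ a) : (a ^ ((1 : ℝ) / 3)) ^ 2 ≤ a := by
  nth_rewrite 2 [← rpow_third_pow_three (zero_le_one.trans ha)]
  exact pow_le_pow_right₀ (Real.one_le_rpow ha (by norm_num)) (by norm_num)

lemma log_le_six_mul_sqrt_rpow_third {x : ℝ} (hx : 1 ≤ x) :
    Real.log x ≤ 6 * Real.sqrt x ^ ((1 : ℝ) / 3) := by
  set z := Real.sqrt x ^ ((1 : ℝ) / 3)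
  have hxz : x = z ^ 6 := by
    rw [show z ^ 6 = (z ^ 3) ^ 2 by ring, rpow_third_pow_three (Real.sqrt_nonneg x),
      Real.sq_sqrt (by linarith)]
  have hzpos : 0 < z := Real.rpow_pos_of_pos (Real.sqrt_pos.2 (by linarith)) _
  rw [hxz, Real.log_pow, Nat.cast_ofNat]
  linarith [Real.log_le_sub_one_of_pos hzpos]

lemma rpow_third_sq_mul_log_le {a x : ℝ} (ha : 0 ≤ a) (hx : 1 ≤ x) (h : a ≤ Real.sqrt x) :
    (a ^ ((1 : ℝ) / 3)) ^ 2 * Real.log x ≤ 6 * Real.sqrt x := by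
  have hlog := Real.log_nonneg hx
  calc (a ^ ((1 : ℝ) / 3)) ^ 2 * Real.log x
      ≤ (Real.sqrt x ^ ((1 : ℝ) / 3)) ^ 2 * (6 * Real.sqrt x ^ ((1 : ℝ) / 3)) := by
        gcongr
        exact log_le_six_mul_sqrt_rpow_third hx
    _ = 6 * (Real.sqrt x ^ ((1 : ℝ) / 3)) ^ 3 := by ring
    _ = 6 * Real.sqrt x := by rw [rpow_third_pow_three (Real.sqrt_nonneg x)]

lemma log_sixteen_lt : Real.log 16 < 3 := by
  rw [show (16 : ℝ) = 2 ^ 4 by norm_num, Real.log_pow]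
  push_cast
  linarith [Real.log_two_lt_d9]

lemma mul_mul_le_one_div {a b q x l c : ℝ} (hx : 0 < x) (hl : 0 < l) (hq : q ≤ 1 / x)
    (hc : 0 < c) (hcb : c ≤ b) (h : a ≤ b⁻¹ * q / l) : a * x * l ≤ 1 / c := by
  have hb : 0 < b := hc.trans_le hcb
  calc a * x * l ≤ b⁻¹ * q / l * x * l := by gcongr
    _ = b⁻¹ * (q * x) := by field_simp
    _ ≤ b⁻¹ * 1 := by
        gcongr
        exact (le_div_iff₀ hx).1 hq
    _ ≤ 1 / c := by
        rw [mul_one, one_div]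
        exact inv_anti₀ hc hcb

lemma exp_two_lt : Real.exp 2 < 15 / 2 := by
  rw [show (2 : ℝ) = 1 + 1 by norm_num, Real.exp_add]
  nlinarith [Real.exp_one_lt_d9, Real.exp_pos 1]

lemma mul_exp_neg_cube_le (z : ℝ) : z * Real.exp (-(z ^ 3 / 8)) ≤ 2 := by
  have hexp : z ≤ 2 * Real.exp (z ^ 3 / 8) := by
    rcases le_total z 0 with hz | hz
    · linarith [Real.exp_pos (z ^ 3 / 8)]
    · nlinarith [Real.add_one_le_exp (z ^ 3 / 8), mul_nonneg hz (sq_nonneg (z - 2)),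
        sq_nonneg (z - 2)]
  rw [Real.exp_neg, ← div_eq_mul_inv]
  exact (div_le_iff₀ (Real.exp_pos _)).2 hexp

lemma pow_three_sub_le_sum_pow_three {ι : Type*} [Fintype ι] {x : ι → ℝ} {c : ℝ} (hc : 0 ≤ c)
    (h : ∀ i, -c ≤ x i) (i₀ : ι) : x i₀ ^ 3 - Fintype.card ι * c ^ 3 ≤ ∑ i, x i ^ 3 := by
  classical
  have hterm : ∀ i, 0 ≤ x i ^ 3 + c ^ 3 := fun i => by
    have := (Odd.pow_le_pow (n := 3) (by decide)).2 (h i)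
    rw [Odd.neg_pow (by decide)] at this
    linarith
  have hsingle := single_le_sum (fun i _ => hterm i) (mem_univ i₀)
  rw [sum_add_distrib, sum_const, nsmul_eq_mul, card_univ] at hsingle
  linarith [pow_nonneg hc 3]

/-! ### Sequences of quadratic growth -/

/-- A positive sequence with quadratic increments `w (s + 1) = w s + g s * w s ^ 2` of varying
rate `g s`: the discrete form of `w' = g w ^ 2`, whose explosion bounds the total rate. -/
structure IsQuadraticGrowth (w g : ℕ → ℝ) : Prop where
  zero_pos : 0 < w 0
  rate_nonneg : ∀ s, 0 ≤ g s
  succ_eq : ∀ s, w (s + 1) = w s + g s * w s ^ 2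

namespace IsQuadraticGrowth

variable {w g : ℕ → ℝ}

lemma monotone (h : IsQuadraticGrowth w g) : Monotone w :=
  monotone_nat_of_le_succ fun s => by
    rw [h.succ_eq]
    exact le_add_of_nonneg_right (mul_nonneg (h.rate_nonneg s) (sq_nonneg _))

lemma pos (h : IsQuadraticGrowth w g) (s : ℕ) : 0 < w s :=
  h.zero_pos.trans_le (h.monotone s.zero_le)

lemma rate_le (h : IsQuadraticGrowth w g) {s : ℕ} (hs : g s * w s ≤ 1) :
    g s ≤ 2 / w s - 2 / w (s + 1) := by
  have hw := h.pos s
  have hg := h.rate_nonneg s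
  have hden : 0 < 1 + g s * w s := by positivity
  have hsucc : w (s + 1) = w s * (1 + g s * w s) := by rw [h.succ_eq]; ring
  calc g s ≤ 2 * g s / (1 + g s * w s) := (le_div_iff₀ hden).2 (by nlinarith)
    _ = 2 / w s - 2 / w (s + 1) := by rw [hsucc]; field_simp; ring

lemma sum_rate_Ico_le (h : IsQuadraticGrowth w g) {a b : ℕ} (hab : a ≤ b)
    (hsmall : ∀ s ∈ Ico a b, g s * w s ≤ 1) : ∑ s ∈ Ico a b, g s ≤ 2 / w a := by
  have hb : 0 < 2 / w b := div_pos two_pos (h.pos b)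
  calc ∑ s ∈ Ico a b, g s ≤ ∑ s ∈ Ico a b, (-(2 / w (s + 1)) - -(2 / w s)) :=
        sum_le_sum fun s hs => by linarith [h.rate_le (hsmall s hs)]
    _ = -(2 / w b) - -(2 / w a) := sum_Ico_sub (fun s => -(2 / w s)) hab
    _ ≤ 2 / w a := by linarith

lemma sum_rate_Ico_le_of_lt (h : IsQuadraticGrowth w g) {a b : ℕ} (hab : a ≤ b)
    (hsmall : ∀ s ∈ Ico a b, g s * w s ≤ 1) {θ : ℝ} (hθ : 0 < θ)
    (habove : ∀ s ∈ Ico a b, θ < w s) : ∑ s ∈ Ico a b, g s ≤ 2 / θ := by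
  rcases hab.eq_or_lt with rfl | hlt
  · simpa only [Ico_self, sum_empty] using (div_pos two_pos hθ).le
  · have hle : 2 / w a ≤ 2 / θ := by
      have := habove a (left_mem_Ico.2 hlt)
      gcongr
    exact (h.sum_rate_Ico_le hab hsmall).trans hle

end IsQuadraticGrowth

lemma exists_crossing_index {α : Type*} [LinearOrder α] {w : ℕ → α} (hw : Monotone w) (θ : α)
    (t : ℕ) : ∃ n ≤ t, (∀ s < n, w s ≤ θ) ∧ ∀ s ∈ Ico n t, θ < w s := by
  induction t with
  | zero => exact ⟨0, le_rfl, by simp, by simp⟩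
  | succ t ih =>
    obtain ⟨n, hnt, hbelow, habove⟩ := ih
    rcases le_or_gt (w t) θ with hwt | hwt
    · exact ⟨t + 1, le_rfl, fun s hs => (hw (Nat.lt_succ_iff.1 hs)).trans hwt, by simp⟩
    · refine ⟨n, Nat.le_succ_of_le hnt, hbelow, fun s hs => ?_⟩
      obtain ⟨hns, hst⟩ := mem_Ico.1 hs
      rcases (Nat.lt_succ_iff.1 hst).eq_or_lt with rfl | hlt
      · exact hwt
      · exact habove s (mem_Ico.2 ⟨hns, hlt⟩)

lemma le_two_mul_of_quadratic_growth {R : ℕ → ℝ} {β : ℝ} (hβ : 0 ≤ β) (hR : ∀ s, 0 ≤ R s)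
    {n : ℕ} (hstep : ∀ s < n, R (s + 1) ≤ R s + β * R s ^ 2) (hn : n * (4 * β * R 0) ≤ 1) :
    R n ≤ 2 * R 0 := by
  have h0 := hR 0
  have hdouble : ∀ k ≤ n, (1 + k * (4 * β * R 0)) * R 0 ≤ 2 * R 0 := fun k hk => by
    have : (k : ℝ) * (4 * β * R 0) ≤ n * (4 * β * R 0) := by gcongr
    gcongr
    linarith
  suffices ∀ k ≤ n, R k ≤ (1 + k * (4 * β * R 0)) * R 0 from
    (this n le_rfl).trans (hdouble n le_rfl)
  intro k hk
  induction k with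
  | zero => simp
  | succ k ih =>
    have hle := ih (Nat.le_of_succ_le hk)
    have hRk : R k ≤ 2 * R 0 := hle.trans (hdouble k (Nat.le_of_succ_le hk))
    calc R (k + 1) ≤ R k + β * R k ^ 2 := hstep k hk
      _ ≤ (1 + k * (4 * β * R 0)) * R 0 + β * (2 * R 0) ^ 2 := by
          have := hR k
          gcongr
      _ = (1 + (k + 1 : ℕ) * (4 * β * R 0)) * R 0 := by push_cast; ring

lemma add_mul_sq_le_add_mul_sq {x y g : ℝ} (hxy : x ≤ y) (h : -1 ≤ g * (x + y)) :
    x + g * x ^ 2 ≤ y + g * y ^ 2 := by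
  nlinarith [mul_nonneg (sub_nonneg.2 hxy) (neg_le_iff_add_nonneg.1 h)]

section Dot

variable {d : ℕ}

lemma dot_eq_dotProduct (a b : Fin d → ℝ) : dot a b = dotProduct a b := rfl

lemma dot_comm (a b : Fin d → ℝ) : dot a b = dot b a := dotProduct_comm a b

lemma dot_smul_right (k : ℝ) (a b : Fin d → ℝ) : dot a (k • b) = k * dot a b :=
  dotProduct_smul k a b

lemma dot_smul_left (k : ℝ) (a b : Fin d → ℝ) : dot (k • a) b = k * dot a b :=
  smul_dotProduct k a b

lemma dot_e1 (hd : 0 < d) (a : Fin d → ℝ) : dot a (e1 d hd) = a ⟨0, hd⟩ := by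
  simp [dot, e1]

lemma dot_e1_e1 (hd : 0 < d) : dot (e1 d hd) (e1 d hd) = 1 := by
  simp [dot_e1, e1]

end Dot

lemma netOut_eq_sum_pow {m P d : ℕ} (w : Fin m → Fin d → ℝ) (X : Fin P → Fin d → ℝ) :
    netOut w X = ∑ r, ∑ p, dot (w r) (X p) ^ 3 := by
  simp only [netOut, phi_sub_phi_neg]

namespace Setting

/-! ### The training dynamics in signal and noise coordinates -/

section Dynamics

variable (S : Setting)

/-- Indices of the noise patches of sample `i`. -/
def noise (i : Fin S.N) : Finset (Fin S.P) := univ.erase (S.sig i)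

/-- All noise patches of the training set, as pairs (sample, patch index). -/
def noisePairs : Finset (Σ _ : Fin S.N, Fin S.P) := univ.sigma S.noise

/-- Correlation of neuron `r` with the patch `x i j` at iteration `t`, signed by the label `y i`. -/
def align (i : Fin S.N) (j : Fin S.P) (r : Fin S.m) (t : ℕ) : ℝ :=
  S.y i * dot (S.w t r) (S.x i j)

/-- Strength of the signal left by the adversary in sample `i` at iteration `t`. -/
def advSignal (t : ℕ) (i : Fin S.N) : ℝ :=
  S.y i * dot (S.xadv t i (S.sig i)) (e1 S.d S.hd)

/-- Contribution of the noise patches to the adversarial margin. -/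
def noiseMargin (t : ℕ) (i : Fin S.N) : ℝ := ∑ r, ∑ j ∈ S.noise i, S.align i j r t ^ 3

/-- The rate `g` in the signal update `w ↦ w + g * w ^ 2`, common to all neurons. -/
def signalRate (t : ℕ) : ℝ :=
  3 * S.eta / S.N * ∑ i ∈ S.SL, psi (S.marg t i) * S.advSignal t i ^ 3

/-- Total noise coefficient of neuron `r`. -/
def rhoSum (r : Fin S.m) (t : ℕ) : ℝ := ∑ z ∈ S.noisePairs, S.rho z.1 z.2 r t

end Dynamics

variable {S : Setting}

lemma mem_noise {i : Fin S.N} {j : Fin S.P} : j ∈ S.noise i ↔ j ≠ S.sig i := by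
  simp [noise]

lemma mem_noisePairs {z : Σ _ : Fin S.N, Fin S.P} : z ∈ S.noisePairs ↔ z.2 ≠ S.sig z.1 := by
  simp [noisePairs, mem_noise]

lemma sum_patches (i : Fin S.N) {β : Type*} [AddCommMonoid β] (f : Fin S.P → β) :
    ∑ p, f p = f (S.sig i) + ∑ j ∈ S.noise i, f j :=
  (add_sum_erase _ f (mem_univ _)).symm

lemma sum_samples {β : Type*} [AddCommMonoid β] (f : Fin S.N → β) :
    ∑ i, f i = ∑ i ∈ S.SL, f i + ∑ i ∈ S.SU, f i := by
  rw [← S.hunion, sum_union S.hdisj]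

lemma mem_SL_or_SU (i : Fin S.N) : i ∈ S.SL ∨ i ∈ S.SU :=
  mem_union.1 (S.hunion ▸ mem_univ i)

lemma y_mul_y (i : Fin S.N) : S.y i * S.y i = 1 :=
  mul_self_eq_one_iff.2 (S.hy i)

lemma abs_y (i : Fin S.N) : |S.y i| = 1 := by
  rcases S.hy i with h | h <;> simp [h]

lemma y_mul_pow_three (i : Fin S.N) (z : ℝ) : S.y i * z ^ 3 = (S.y i * z) ^ 3 := by
  linear_combination (-S.y i * z ^ 3) * y_mul_y i

lemma align_sq (i : Fin S.N) (j : Fin S.P) (r : Fin S.m) (t : ℕ) :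
    S.align i j r t ^ 2 = dot (S.w t r) (S.x i j) ^ 2 := by
  rw [align]
  linear_combination dot (S.w t r) (S.x i j) ^ 2 * y_mul_y i

lemma wsig_eq_dot (t : ℕ) (r : Fin S.m) : S.wsig t r = dot (S.w t r) (e1 S.d S.hd) :=
  (dot_e1 S.hd _).symm

lemma exists_xadv_sig_eq (t : ℕ) (i : Fin S.N) :
    ∃ c : ℝ, S.xadv t i (S.sig i) = c • S.x i (S.sig i) := by
  obtain ⟨c, hc⟩ := S.hadvspan t i
  exact ⟨c + 1, by rw [add_smul, one_smul, ← hc, sub_add_cancel]⟩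

lemma xadv_sig_of_mem_SL (t : ℕ) {i : Fin S.N} (hi : i ∈ S.SL) :
    S.xadv t i (S.sig i) = (S.y i * S.advSignal t i) • e1 S.d S.hd := by
  obtain ⟨c, hc⟩ := exists_xadv_sig_eq t i
  rw [S.hsigL i hi, smul_smul] at hc
  rw [advSignal, hc, dot_smul_left, dot_e1_e1, mul_one, ← mul_assoc (S.y i), y_mul_y, one_mul]

lemma exists_xadv_sig_eq_of_mem_SU (t : ℕ) {i : Fin S.N} (hi : i ∈ S.SU) :
    ∃ c : ℝ, S.xadv t i (S.sig i) = c • eLast S.d S.hd := by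
  obtain ⟨c, hc⟩ := exists_xadv_sig_eq t i
  exact ⟨_, by rw [hc, S.hsigU i hi, smul_smul]⟩

lemma dot_xadv_sig_of_mem_SL (t : ℕ) (r : Fin S.m) {i : Fin S.N} (hi : i ∈ S.SL) :
    dot (S.w t r) (S.xadv t i (S.sig i)) = S.y i * S.advSignal t i * S.wsig t r := by
  rw [xadv_sig_of_mem_SL t hi, dot_smul_right, wsig_eq_dot]

lemma dot_xadv_sig_of_mem_SU (t : ℕ) (r : Fin S.m) {i : Fin S.N} (hi : i ∈ S.SU) :
    dot (S.w t r) (S.xadv t i (S.sig i)) = 0 := by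
  obtain ⟨c, hc⟩ := exists_xadv_sig_eq_of_mem_SU t hi
  rw [hc, dot_smul_right, S.hwperp, mul_zero]

lemma dot_xadv_sig_noise (t : ℕ) (i k : Fin S.N) {q : Fin S.P} (hq : q ≠ S.sig k) :
    dot (S.xadv t i (S.sig i)) (S.x k q) = 0 := by
  rw [dot_comm]
  rcases mem_SL_or_SU i with hi | hi
  · rw [xadv_sig_of_mem_SL t hi, dot_smul_right, S.hnoiseU k q hq, mul_zero]
  · obtain ⟨c, hc⟩ := exists_xadv_sig_eq_of_mem_SU t hi
    rw [hc, dot_smul_right, S.hnoiseV k q hq, mul_zero]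

lemma marg_eq_sum (t : ℕ) (i : Fin S.N) :
    S.marg t i =
      ∑ r, (S.y i * dot (S.w t r) (S.xadv t i (S.sig i))) ^ 3 + S.noiseMargin t i := by
  rw [marg, netOut_eq_sum_pow, mul_sum, noiseMargin, ← sum_add_distrib]
  refine sum_congr rfl fun r _ => ?_
  rw [sum_patches i, mul_add, y_mul_pow_three, mul_sum]
  congr 1
  refine sum_congr rfl fun j hj => ?_
  rw [S.hadvnoise t i j (mem_noise.1 hj), y_mul_pow_three, align]

lemma marg_of_mem_SL (t : ℕ) {i : Fin S.N} (hi : i ∈ S.SL) :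
    S.marg t i = ∑ r, (S.advSignal t i * S.wsig t r) ^ 3 + S.noiseMargin t i := by
  simp only [marg_eq_sum, dot_xadv_sig_of_mem_SL t _ hi, ← mul_assoc, y_mul_y, one_mul]

lemma marg_of_mem_SU (t : ℕ) {i : Fin S.N} (hi : i ∈ S.SU) :
    S.marg t i = S.noiseMargin t i := by
  simp [marg_eq_sum, dot_xadv_sig_of_mem_SU t _ hi]

lemma ATDyn.dot_succ (h : S.ATDyn) (t : ℕ) (r : Fin S.m) (b : Fin S.d → ℝ) :
    dot (S.w (t + 1) r) b = dot (S.w t r) b + 3 * S.eta / S.N *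
      ∑ i, psi (S.marg t i) * S.y i *
        (dot (S.w t r) (S.xadv t i (S.sig i)) ^ 2 * dot (S.xadv t i (S.sig i)) b +
          ∑ j ∈ S.noise i, dot (S.w t r) (S.x i j) ^ 2 * dot (S.x i j) b) := by
  rw [h t r, dot_eq_dotProduct, add_dotProduct, smul_dotProduct, sum_dotProduct, smul_eq_mul]
  congr 2
  refine sum_congr rfl fun i _ => ?_
  rw [smul_dotProduct, sum_dotProduct, sum_patches i, smul_dotProduct]
  congr 2
  refine sum_congr rfl fun j hj => ?_
  rw [S.hadvnoise t i j (mem_noise.1 hj), smul_dotProduct, smul_eq_mul]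
  rfl

lemma ATDyn.wsig_succ (h : S.ATDyn) (t : ℕ) (r : Fin S.m) :
    S.wsig (t + 1) r = S.wsig t r + S.signalRate t * S.wsig t r ^ 2 := by
  have hnoise : ∀ i, ∑ j ∈ S.noise i,
      dot (S.w t r) (S.x i j) ^ 2 * dot (S.x i j) (e1 S.d S.hd) = 0 := fun i =>
    sum_eq_zero fun j hj => by rw [S.hnoiseU i j (mem_noise.1 hj), mul_zero]
  have hupd := h.dot_succ t r (e1 S.d S.hd)
  simp only [hnoise, add_zero] at hupd
  rw [wsig_eq_dot, hupd, ← wsig_eq_dot, signalRate, mul_assoc, sum_samples,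
    sum_eq_zero (s := S.SU), add_zero, sum_mul]
  · congr 2
    refine sum_congr rfl fun i hi => ?_
    rw [dot_xadv_sig_of_mem_SL t r hi, xadv_sig_of_mem_SL t hi, dot_smul_left, dot_e1_e1]
    linear_combination psi (S.marg t i) * S.advSignal t i ^ 3 * S.wsig t r ^ 2 *
      (S.y i * S.y i + 1) * y_mul_y i
  · intro i hi
    rw [dot_xadv_sig_of_mem_SU t r hi]
    ring

lemma ATDyn.align_eq (h : S.ATDyn) (r : Fin S.m) (k : Fin S.N) {q : Fin S.P}
    (hq : q ≠ S.sig k) (t : ℕ) :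
    S.align k q r t = S.align k q r 0 +
      ∑ z ∈ S.noisePairs, S.rho z.1 z.2 r t * (S.y z.1 * S.y k * dot (S.x z.1 z.2) (S.x k q)) := by
  induction t with
  | zero => simp [rho]
  | succ t ih =>
    have hstep : S.align k q r (t + 1) = S.align k q r t + ∑ z ∈ S.noisePairs,
        3 * S.eta / S.N * psi (S.marg t z.1) * dot (S.w t r) (S.x z.1 z.2) ^ 2 *
          (S.y z.1 * S.y k * dot (S.x z.1 z.2) (S.x k q)) := by
      rw [align, h.dot_succ, mul_add, noisePairs, sum_sigma, ← align]
      simp only [dot_xadv_sig_noise t _ k hq, mul_zero, zero_add, mul_sum]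
      congr 1
      exact sum_congr rfl fun i _ => sum_congr rfl fun j _ => by ring
    rw [hstep, ih, add_assoc, ← sum_add_distrib]
    simp only [rho, add_mul]

lemma rho_succ (i : Fin S.N) (j : Fin S.P) (r : Fin S.m) (t : ℕ) :
    S.rho i j r (t + 1) =
      S.rho i j r t + 3 * S.eta / S.N * psi (S.marg t i) * S.align i j r t ^ 2 := by
  rw [rho, align_sq]

lemma rho_eq_sum (i : Fin S.N) (j : Fin S.P) (r : Fin S.m) (t : ℕ) :
    S.rho i j r t =
      ∑ s ∈ range t, 3 * S.eta / S.N * psi (S.marg s i) * S.align i j r s ^ 2 := by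
  induction t with
  | zero => simp [rho]
  | succ t ih => rw [sum_range_succ, ← ih, rho_succ]

lemma rho_sub_rho_eq_sum (i : Fin S.N) (j : Fin S.P) (r : Fin S.m) {n t : ℕ} (h : n ≤ t) :
    S.rho i j r t - S.rho i j r n =
      ∑ s ∈ Ico n t, 3 * S.eta / S.N * psi (S.marg s i) * S.align i j r s ^ 2 := by
  rw [rho_eq_sum, rho_eq_sum, sum_Ico_eq_sub _ h]

lemma rate_nonneg (S : Setting) : 0 ≤ 3 * S.eta / S.N :=
  div_nonneg (mul_nonneg zero_le_three S.heta.le) (Nat.cast_nonneg _)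

lemma rho_monotone (i : Fin S.N) (j : Fin S.P) (r : Fin S.m) : Monotone (S.rho i j r) :=
  monotone_nat_of_le_succ fun t => by
    rw [rho]
    exact le_add_of_nonneg_right
      (mul_nonneg (mul_nonneg S.rate_nonneg (psi_nonneg _)) (sq_nonneg _))

lemma rho_nonneg (i : Fin S.N) (j : Fin S.P) (r : Fin S.m) (t : ℕ) : 0 ≤ S.rho i j r t :=
  rho_monotone i j r t.zero_le

lemma ATDyn.abs_align_sub_le (h : S.ATDyn) {X : ℝ}
    (hcross : ∀ i k j q, j ≠ S.sig i → q ≠ S.sig k → ((i, j) : Fin S.N × Fin S.P) ≠ (k, q) →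
      |dot (S.x i j) (S.x k q)| ≤ X) (hX : 0 ≤ X)
    (r : Fin S.m) (k : Fin S.N) {q : Fin S.P} (hq : q ≠ S.sig k) (t : ℕ) :
    |S.align k q r t - (S.align k q r 0 + S.rho k q r t * sqnorm (S.x k q))| ≤
      X * S.rhoSum r t := by
  let f : (Σ _ : Fin S.N, Fin S.P) → ℝ := fun z =>
    S.rho z.1 z.2 r t * (S.y z.1 * S.y k * dot (S.x z.1 z.2) (S.x k q))
  have hmem : (⟨k, q⟩ : Σ _ : Fin S.N, Fin S.P) ∈ S.noisePairs := mem_noisePairs.2 hq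
  have hdiag : f ⟨k, q⟩ = S.rho k q r t * sqnorm (S.x k q) := by
    simp only [f, y_mul_y, one_mul, sqnorm]
  have hoff : ∀ z ∈ S.noisePairs.erase ⟨k, q⟩, |f z| ≤ S.rho z.1 z.2 r t * X := fun z hz => by
    obtain ⟨hne, hz⟩ := mem_erase.1 hz
    have hρ := rho_nonneg z.1 z.2 r t
    have hpair : (z.1, z.2) ≠ (k, q) := fun he => hne <| by
      obtain ⟨i, j⟩ := z; cases he; rfl
    simp only [f, abs_mul, abs_y, one_mul, abs_of_nonneg hρ]
    exact mul_le_mul_of_nonneg_left (hcross _ _ _ _ (mem_noisePairs.1 hz) hq hpair) hρ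
  have hsplit : S.align k q r t - (S.align k q r 0 + S.rho k q r t * sqnorm (S.x k q)) =
      ∑ z ∈ S.noisePairs.erase ⟨k, q⟩, f z := by
    rw [h.align_eq r k hq t, ← add_sum_erase _ f hmem, hdiag]
    ring
  calc |S.align k q r t - (S.align k q r 0 + S.rho k q r t * sqnorm (S.x k q))|
      ≤ ∑ z ∈ S.noisePairs.erase ⟨k, q⟩, S.rho z.1 z.2 r t * X := by
        rw [hsplit]
        exact (abs_sum_le_sum_abs _ _).trans (sum_le_sum hoff)
    _ ≤ ∑ z ∈ S.noisePairs, S.rho z.1 z.2 r t * X :=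
        sum_le_sum_of_subset_of_nonneg (erase_subset _ _) fun z _ _ =>
          mul_nonneg (rho_nonneg _ _ _ _) hX
    _ = X * S.rhoSum r t := by rw [← sum_mul, rhoSum, mul_comm]

/-! ### The maximum shifted coefficient -/

lemma rhoHat_succ (k : Fin S.N) (q : Fin S.P) (r : Fin S.m) (t : ℕ) :
    S.rhoHat k q r (t + 1) =
      S.rhoHat k q r t + 3 * S.eta / S.N * psi (S.marg t k) * S.align k q r t ^ 2 := by
  rw [rhoHat, rhoHat, rho_succ]
  ring

lemma rhoHat_mul_sqnorm {k : Fin S.N} {q : Fin S.P} (h : sqnorm (S.x k q) ≠ 0)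
    (r : Fin S.m) (t : ℕ) :
    S.rhoHat k q r t * sqnorm (S.x k q) =
      S.align k q r 0 + S.rho k q r t * sqnorm (S.x k q) := by
  rw [rhoHat, add_mul, div_mul_cancel₀ _ h, add_comm, align]

/-- The set of shifted coefficients of which `rhoHatMax` is the supremum. -/
def rhoHatSet (S : Setting) (t : ℕ) : Set ℝ :=
  {z : ℝ | ∃ r : Fin S.m, ∃ k ∈ S.SU, ∃ q, q ≠ S.sig k ∧ z = S.rhoHat k q r t}

lemma finite_rhoHatSet (S : Setting) (t : ℕ) : (S.rhoHatSet t).Finite := by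
  refine (Set.finite_range fun z : Fin S.m × Fin S.N × Fin S.P =>
    S.rhoHat z.2.1 z.2.2 z.1 t).subset ?_
  rintro z ⟨r, k, -, q, -, rfl⟩
  exact ⟨(r, k, q), rfl⟩

lemma rhoHat_le_rhoHatMax {k : Fin S.N} (hk : k ∈ S.SU) {q : Fin S.P} (hq : q ≠ S.sig k)
    (r : Fin S.m) (t : ℕ) : S.rhoHat k q r t ≤ S.rhoHatMax t :=
  le_csSup (S.finite_rhoHatSet t).bddAbove ⟨r, k, hk, q, hq, rfl⟩

lemma exists_ne_sig (hP : 2 ≤ S.P) (k : Fin S.N) : ∃ q, q ≠ S.sig k :=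
  have := Fin.nontrivial_iff_two_le.2 hP
  exists_ne (S.sig k)

lemma exists_rhoHatMax_eq (hP : 2 ≤ S.P) (hSU : S.SU.Nonempty) (t : ℕ) :
    ∃ r : Fin S.m, ∃ k ∈ S.SU, ∃ q, q ≠ S.sig k ∧ S.rhoHatMax t = S.rhoHat k q r t := by
  obtain ⟨k, hk⟩ := hSU
  obtain ⟨q, hq⟩ := exists_ne_sig hP k
  have hne : (S.rhoHatSet t).Nonempty := ⟨_, ⟨0, S.hm⟩, k, hk, q, hq, rfl⟩
  exact hne.csSup_mem (S.finite_rhoHatSet t)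

lemma rhoHatMax_monotone (hP : 2 ≤ S.P) (hSU : S.SU.Nonempty) : Monotone S.rhoHatMax :=
  monotone_nat_of_le_succ fun t => by
    obtain ⟨r, k, hk, q, hq, h⟩ := exists_rhoHatMax_eq hP hSU t
    calc S.rhoHatMax t = S.rhoHat k q r t := h
      _ ≤ S.rhoHat k q r (t + 1) := add_le_add_left (rho_monotone k q r t.le_succ) _
      _ ≤ S.rhoHatMax (t + 1) := rhoHat_le_rhoHatMax hk hq r (t + 1)

/-! ### Scales of the problem -/

section Scales

variable (S : Setting)

/-- Typical norm of a noise patch. -/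
def noiseNorm : ℝ := S.sigman * Real.sqrt S.d

/-- Typical correlation of a neuron with a noise patch at initialization. -/
def initAlign : ℝ := S.sigma0 * S.noiseNorm

/-- The maximum shifted coefficient on the scale of correlations: the order of magnitude of the
correlation of the best aligned neuron with an unlearnable noise patch. -/
def peak (t : ℕ) : ℝ := S.noiseNorm ^ 2 * S.rhoHatMax t

/-- The logarithmic factor of Condition (H). -/
def logHorizon : ℝ := Real.log ((S.T : ℝ) * S.N * S.m * S.P / S.delta)

/-- The logarithmic factor in the initialization bounds of the event `E`. -/
def logInit : ℝ := Real.log ((16 : ℝ) * S.N * S.m * S.P / S.delta)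

/-- Inner product of two distinct noise patches, relative to `noiseNorm ^ 2`. -/
def overlap : ℝ :=
  2 * Real.sqrt (Real.log ((16 : ℝ) * S.N ^ 2 * S.P ^ 2 / S.delta)) / Real.sqrt S.d

/-- Total influence of the unlearnable noise patches on any other noise patch, relative
to `peak`. The last factor bounds the ratio of `rho` to `rhoHatMax`. -/
def crosstalk : ℝ := S.overlap * S.SU.card * S.P * (60 * Real.sqrt S.logHorizon)

/-- The consequences of Condition (H) and of the sparse regime that drive the dynamics, for the
memorization threshold `C₁`. -/
structure Bounds (C₁ : ℝ) : Prop where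
  two_le_P : 2 ≤ S.P
  nonempty_SU : S.SU.Nonempty
  N_le : (S.N : ℝ) ≤ 2 * S.SL.card
  eps_le : S.eps ≤ S.alpha / 2
  one_le_logHorizon : 1 ≤ S.logHorizon
  one_le_logInit : 1 ≤ S.logInit
  logInit_le : S.logInit ≤ 5 * S.logHorizon
  overlap_le : S.overlap * S.N * S.P ≤ 1 / 1000
  crosstalk_le : S.crosstalk ≤ 1 / 1000
  crosstalk_mul_le : S.crosstalk * C₁ ≤ 1 / 1000
  crosstalk_mul_sq_le : 512 * (S.crosstalk * C₁) * S.noiseNorm ^ 2 ≤ S.alpha ^ 2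
  noiseNorm_pow_le : 10 ^ 9 * S.logHorizon ^ 2 * S.noiseNorm ^ 3 ≤ S.N * S.alpha ^ 3
  initAlign_mul_sq_le : 4096 * (S.m : ℝ) ^ ((1 : ℝ) / 3) * S.logHorizon * S.initAlign *
    S.noiseNorm ^ 2 ≤ S.alpha ^ 2
  initAlign_le :
    ((S.m : ℝ) * S.P) ^ ((1 : ℝ) / 3) * (Real.sqrt S.logHorizon * S.initAlign) ≤ 1 / 16
  alpha_mul_sigma0_le : (S.m : ℝ) ^ ((1 : ℝ) / 3) * (S.alpha * (S.sigma0 * S.logHorizon)) ≤ 1 / 10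
  eta_mul_alpha_sq_le : 50 * (S.eta * S.alpha ^ 2) ≤ 1
  eta_mul_sigma0_le : 25 * (S.eta * S.alpha ^ 3 * (S.sigma0 * S.logHorizon)) ≤ 1

end Scales

lemma noiseNorm_pos (S : Setting) : 0 < S.noiseNorm :=
  mul_pos S.hsigman (Real.sqrt_pos.2 (Nat.cast_pos.2 S.hd))

lemma noiseNorm_sq (S : Setting) : S.noiseNorm ^ 2 = S.sigman ^ 2 * S.d := by
  rw [noiseNorm, mul_pow, Real.sq_sqrt (Nat.cast_nonneg _)]

lemma peak_sq (S : Setting) (t : ℕ) :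
    S.peak t ^ 2 = S.sigman ^ 4 * (S.d : ℝ) ^ 2 * S.rhoHatMax t ^ 2 := by
  rw [peak, noiseNorm_sq]
  ring

lemma initAlign_pos (S : Setting) : 0 < S.initAlign := mul_pos S.hsigma0 S.noiseNorm_pos

lemma overlap_nonneg (S : Setting) : 0 ≤ S.overlap := by
  unfold overlap
  positivity

lemma crosstalk_nonneg (S : Setting) : 0 ≤ S.crosstalk := by
  have := S.overlap_nonneg
  unfold crosstalk
  positivity

namespace Bounds

variable {C₁ : ℝ}

lemma one_le_sqrt_logHorizon (hB : S.Bounds C₁) : 1 ≤ Real.sqrt S.logHorizon :=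
  Real.one_le_sqrt.2 hB.one_le_logHorizon

lemma one_le_sqrt_logInit (hB : S.Bounds C₁) : 1 ≤ Real.sqrt S.logInit :=
  Real.one_le_sqrt.2 hB.one_le_logInit

lemma sqrt_logInit_le (hB : S.Bounds C₁) :
    Real.sqrt S.logInit ≤ 9 / 4 * Real.sqrt S.logHorizon := by
  have hL := hB.one_le_logHorizon
  rw [Real.sqrt_le_left (by positivity), mul_pow, Real.sq_sqrt (by linarith)]
  linarith [hB.logInit_le]

lemma sqrt_two_mul_logInit_le (hB : S.Bounds C₁) :
    Real.sqrt (2 * S.logInit) ≤ 4 * S.logHorizon := by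
  have hL := hB.one_le_logHorizon
  rw [Real.sqrt_le_left (by positivity)]
  nlinarith [hB.logInit_le]

end Bounds

/-! ### Consequences of the concentration event -/

namespace EventE

section Norms

variable (hE : S.EventE) {i : Fin S.N} {j : Fin S.P} (hj : j ≠ S.sig i)

include hE hj

lemma le_sqnorm : S.noiseNorm ^ 2 / 2 ≤ sqnorm (S.x i j) := by
  obtain ⟨hnorm, -⟩ := hE
  exact S.noiseNorm_sq ▸ (hnorm i j hj).1

lemma sqnorm_le : sqnorm (S.x i j) ≤ 3 / 2 * S.noiseNorm ^ 2 := by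
  obtain ⟨hnorm, -⟩ := hE
  rw [noiseNorm_sq]
  linarith [(hnorm i j hj).2]

lemma sqnorm_pos : 0 < sqnorm (S.x i j) :=
  (half_pos (pow_pos S.noiseNorm_pos 2)).trans_le (hE.le_sqnorm hj)

lemma abs_align_zero_le (r : Fin S.m) :
    |S.align i j r 0| ≤ 2 * Real.sqrt S.logInit * S.initAlign := by
  obtain ⟨-, -, -, -, -, hinit, -⟩ := hE
  rw [align, abs_mul, abs_y, one_mul]
  refine (hinit r i j hj).trans_eq ?_
  rw [Real.sqrt_mul (Nat.cast_nonneg _), initAlign, noiseNorm, logInit]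
  ring

lemma exists_initAlign_le_align_zero : ∃ r, S.initAlign / 4 ≤ S.align i j r 0 := by
  obtain ⟨-, -, -, -, -, -, -, hmax⟩ := hE
  simpa only [initAlign, noiseNorm, align, mul_assoc] using hmax i j hj

lemma mul_abs_rhoHat_sub_rho_le (r : Fin S.m) (t : ℕ) :
    S.noiseNorm ^ 2 * |S.rhoHat i j r t - S.rho i j r t| ≤
      4 * Real.sqrt S.logInit * S.initAlign := by
  have hpos := hE.sqnorm_pos hj
  have heq : (S.rhoHat i j r t - S.rho i j r t) * sqnorm (S.x i j) = S.align i j r 0 := by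
    rw [sub_mul, rhoHat_mul_sqnorm hpos.ne', add_sub_cancel_right]
  calc S.noiseNorm ^ 2 * |S.rhoHat i j r t - S.rho i j r t|
      ≤ 2 * sqnorm (S.x i j) * |S.rhoHat i j r t - S.rho i j r t| := by
        gcongr
        linarith [hE.le_sqnorm hj]
    _ = 2 * |S.align i j r 0| := by rw [← heq, abs_mul, abs_of_pos hpos]; ring
    _ ≤ 4 * Real.sqrt S.logInit * S.initAlign := by linarith [hE.abs_align_zero_le hj r]

end Norms

lemma abs_dot_le (hE : S.EventE) (i k : Fin S.N) (j q : Fin S.P) (hj : j ≠ S.sig i)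
    (hq : q ≠ S.sig k) (hne : ((i, j) : Fin S.N × Fin S.P) ≠ (k, q)) :
    |dot (S.x i j) (S.x k q)| ≤ S.noiseNorm ^ 2 * S.overlap := by
  obtain ⟨-, hcross, -⟩ := hE
  refine (hcross i k j q hj hq hne).trans_eq ?_
  have hd : (0 : ℝ) < S.d := Nat.cast_pos.2 S.hd
  have hsd : Real.sqrt S.d ≠ 0 := (Real.sqrt_pos.2 hd).ne'
  rw [Real.sqrt_mul hd.le, noiseNorm, overlap, mul_pow]
  field_simp

lemma abs_wsig_zero_le (hE : S.EventE) {C₁ : ℝ} (hB : S.Bounds C₁) (r : Fin S.m) :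
    |S.wsig 0 r| ≤ 4 * (S.sigma0 * S.logHorizon) := by
  obtain ⟨-, -, -, -, hsignal, -⟩ := hE
  have hle : (S.m : ℝ) ≤ S.N * S.m * S.P := by
    exact_mod_cast (Nat.le_mul_of_pos_left S.m S.hN).trans (Nat.le_mul_of_pos_right _ S.hP)
  have hlog : Real.log ((16 : ℝ) * S.m / S.delta) ≤ S.logInit := by
    have hm : (0 : ℝ) < S.m := Nat.cast_pos.2 S.hm
    have hδ := S.hdelta0
    rw [logInit, mul_assoc (16 * _), mul_assoc 16, ← mul_assoc _ (S.m : ℝ)]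
    gcongr
  rw [wsig_eq_dot]
  calc |dot (S.w 0 r) (e1 S.d S.hd)|
      ≤ S.sigma0 * Real.sqrt (2 * Real.log ((16 : ℝ) * S.m / S.delta)) := hsignal r
    _ ≤ S.sigma0 * Real.sqrt (2 * S.logInit) := by
        have := S.hsigma0
        gcongr
    _ ≤ S.sigma0 * (4 * S.logHorizon) :=
        mul_le_mul_of_nonneg_left hB.sqrt_two_mul_logInit_le S.hsigma0.le
    _ = 4 * (S.sigma0 * S.logHorizon) := by ring

lemma exists_le_wsig_zero (hE : S.EventE) : ∃ r, S.sigma0 / 2 ≤ S.wsig 0 r := by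
  obtain ⟨-, -, -, -, -, -, hmax, -⟩ := hE
  simpa only [wsig_eq_dot] using hmax

variable {C₁ : ℝ}

lemma initAlign_le_peak (hE : S.EventE) (hB : S.Bounds C₁) (t : ℕ) :
    S.initAlign ≤ 6 * S.peak t := by
  obtain ⟨k, hk⟩ := hB.nonempty_SU
  obtain ⟨q, hq⟩ := exists_ne_sig hB.two_le_P k
  obtain ⟨r, hr⟩ := hE.exists_initAlign_le_align_zero hq
  have hpos := hE.sqnorm_pos hq
  have hle : S.rhoHat k q r 0 ≤ S.rhoHatMax t := (rhoHat_le_rhoHatMax hk hq r 0).trans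
    (rhoHatMax_monotone hB.two_le_P hB.nonempty_SU t.zero_le)
  have heq : S.rhoHat k q r 0 * sqnorm (S.x k q) = S.align k q r 0 := by
    rw [rhoHat_mul_sqnorm hpos.ne', rho, zero_mul, add_zero]
  have hnonneg : 0 ≤ S.rhoHatMax t :=
    (nonneg_of_mul_nonneg_left (by linarith [S.initAlign_pos]) hpos).trans hle
  calc S.initAlign ≤ 4 * (S.rhoHat k q r 0 * sqnorm (S.x k q)) := by linarith
    _ ≤ 4 * (S.rhoHatMax t * (3 / 2 * S.noiseNorm ^ 2)) := by
        have := hE.sqnorm_le hq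
        gcongr
    _ = 6 * S.peak t := by rw [peak]; ring

lemma peak_pos (hE : S.EventE) (hB : S.Bounds C₁) (t : ℕ) : 0 < S.peak t := by
  linarith [hE.initAlign_le_peak hB t, S.initAlign_pos]

lemma peak_zero_le (hE : S.EventE) (hB : S.Bounds C₁) :
    S.peak 0 ≤ 4 * Real.sqrt S.logInit * S.initAlign := by
  obtain ⟨r, k, -, q, hq, h⟩ := exists_rhoHatMax_eq hB.two_le_P hB.nonempty_SU 0
  calc S.peak 0 = S.noiseNorm ^ 2 * (S.rhoHat k q r 0 - S.rho k q r 0) := by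
        rw [peak, h, rho, sub_zero]
    _ ≤ S.noiseNorm ^ 2 * |S.rhoHat k q r 0 - S.rho k q r 0| := by
        gcongr
        exact le_abs_self _
    _ ≤ 4 * Real.sqrt S.logInit * S.initAlign := hE.mul_abs_rhoHat_sub_rho_le hq r 0

end EventE

lemma Bounds.peak_monotone {C₁ : ℝ} (hB : S.Bounds C₁) : Monotone S.peak := fun _ _ h =>
  mul_le_mul_of_nonneg_left (rhoHatMax_monotone hB.two_le_P hB.nonempty_SU h) (sq_nonneg _)

/-! ### Noise correlations and the one-step dynamics -/

/-- Noise stability of the learnable samples at iteration `t`: their noise coefficients stay at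
the initialization scale, up to the influence of the unlearnable samples. -/
def LearnableSmall (S : Setting) (t : ℕ) : Prop :=
  ∀ i ∈ S.SL, ∀ j, j ≠ S.sig i → ∀ r,
    S.noiseNorm ^ 2 * S.rho i j r t ≤ S.initAlign + S.crosstalk * S.peak t

/-- Noise memorization is below the threshold `C₁` at iteration `t`: the hypothesis on `rhoHatMax`
of the theorem, on the scale of correlations. -/
def BelowThreshold (S : Setting) (C₁ : ℝ) (t : ℕ) : Prop :=
  ((S.m : ℝ) * S.P) ^ ((1 : ℝ) / 3) * S.peak t ≤ C₁

lemma belowThreshold_iff {C₁ : ℝ} {t : ℕ} :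
    S.BelowThreshold C₁ t ↔
      S.rhoHatMax t ≤ C₁ / (((S.m : ℝ) * S.P) ^ ((1 : ℝ) / 3) * S.sigman ^ 2 * S.d) := by
  have := S.hm; have := S.hP; have := S.hd; have := S.hsigman
  rw [le_div_iff₀ (by positivity), BelowThreshold, peak, noiseNorm_sq]
  ring_nf

lemma BelowThreshold.mono {C₁ : ℝ} {s t : ℕ} (h : S.BelowThreshold C₁ t) (hB : S.Bounds C₁)
    (hst : s ≤ t) : S.BelowThreshold C₁ s :=
  (mul_le_mul_of_nonneg_left (hB.peak_monotone hst) (by positivity)).trans h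

lemma sum_noise_le {i : Fin S.N} {f : Fin S.P → ℝ} {b : ℝ} (hb : 0 ≤ b)
    (h : ∀ j, j ≠ S.sig i → f j ≤ b) : ∑ j ∈ S.noise i, f j ≤ S.P * b := by
  have hcard : ((S.noise i).card : ℝ) ≤ S.P := by
    exact_mod_cast (card_le_univ (S.noise i)).trans_eq (Fintype.card_fin S.P)
  calc ∑ j ∈ S.noise i, f j ≤ (S.noise i).card • b :=
        sum_le_card_nsmul _ _ _ fun j hj => h j (mem_noise.1 hj)
    _ ≤ S.P * b := by
        rw [nsmul_eq_mul]
        gcongr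

lemma noiseMargin_le {t : ℕ} {i : Fin S.N} {b : ℝ} (hb : 0 ≤ b)
    (h : ∀ j, j ≠ S.sig i → ∀ r, S.align i j r t ≤ b) :
    S.noiseMargin t i ≤ S.m * S.P * b ^ 3 := by
  have hpatch : ∀ r, ∑ j ∈ S.noise i, S.align i j r t ^ 3 ≤ S.P * b ^ 3 := fun r =>
    sum_noise_le (pow_nonneg hb 3) fun j hj => (Odd.pow_le_pow (by decide)).2 (h j hj r)
  simpa [noiseMargin, mul_assoc] using sum_le_card_nsmul univ _ _ fun r _ => hpatch r

lemma abs_noiseMargin_le {t : ℕ} {i : Fin S.N} {b : ℝ} (hb : 0 ≤ b)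
    (h : ∀ j, j ≠ S.sig i → ∀ r, |S.align i j r t| ≤ b) :
    |S.noiseMargin t i| ≤ S.m * S.P * b ^ 3 := by
  have hpatch : ∀ r, |∑ j ∈ S.noise i, S.align i j r t ^ 3| ≤ S.P * b ^ 3 := fun r =>
    (abs_sum_le_sum_abs _ _).trans <| sum_noise_le (pow_nonneg hb 3) fun j hj => by
      rw [abs_pow]
      exact pow_le_pow_left₀ (abs_nonneg _) (h j hj r) 3
  refine (abs_sum_le_sum_abs _ _).trans ?_
  simpa [mul_assoc] using sum_le_card_nsmul univ _ _ fun r _ => hpatch r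

lemma EventE.mul_rho_le_of_mem_SU {C₁ : ℝ} (hE : S.EventE) (hB : S.Bounds C₁) {k : Fin S.N}
    (hk : k ∈ S.SU) {q : Fin S.P} (hq : q ≠ S.sig k) (r : Fin S.m) (t : ℕ) :
    S.noiseNorm ^ 2 * S.rho k q r t ≤ 60 * Real.sqrt S.logHorizon * S.peak t := by
  have hR := hE.peak_pos hB t
  have hshift := hE.mul_abs_rhoHat_sub_rho_le hq r t
  have hle : S.noiseNorm ^ 2 * (S.rho k q r t - S.rhoHat k q r t) ≤
      S.noiseNorm ^ 2 * |S.rhoHat k q r t - S.rho k q r t| := by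
    rw [abs_sub_comm]
    gcongr
    exact le_abs_self _
  have hmax : S.noiseNorm ^ 2 * S.rhoHat k q r t ≤ S.peak t :=
    mul_le_mul_of_nonneg_left (rhoHat_le_rhoHatMax hk hq r t) (sq_nonneg _)
  calc S.noiseNorm ^ 2 * S.rho k q r t
      ≤ S.peak t + 4 * Real.sqrt S.logInit * S.initAlign := by linarith
    _ ≤ Real.sqrt S.logHorizon * S.peak t +
        4 * (9 / 4 * Real.sqrt S.logHorizon) * (6 * S.peak t) := by
        have hι := S.initAlign_pos
        gcongr
        · exact le_mul_of_one_le_left hR.le hB.one_le_sqrt_logHorizon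
        · exact hB.sqrt_logInit_le
        · exact hE.initAlign_le_peak hB t
    _ ≤ 60 * Real.sqrt S.logHorizon * S.peak t := by
        nlinarith [mul_pos (zero_lt_one.trans_le hB.one_le_sqrt_logHorizon) hR]

namespace LearnableSmall

variable {C₁ : ℝ} {t : ℕ}

lemma overlap_mul_rhoSum_le (hS : S.LearnableSmall t) (hE : S.EventE) (hB : S.Bounds C₁)
    (r : Fin S.m) :
    S.noiseNorm ^ 2 * S.overlap * S.rhoSum r t ≤
      S.initAlign / 1000 + 2 * (S.crosstalk * S.peak t) := by
  have hR := hE.peak_pos hB t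
  have hι := S.initAlign_pos
  have hκ := S.crosstalk_nonneg
  have hoverlap := S.overlap_nonneg
  set f := fun i => ∑ j ∈ S.noise i, S.noiseNorm ^ 2 * S.rho i j r t
  have hSL : ∑ i ∈ S.SL, f i ≤ S.N * (S.P * (S.initAlign + S.crosstalk * S.peak t)) := by
    have hcard : (S.SL.card : ℝ) ≤ S.N := by exact_mod_cast card_finset_fin_le S.SL
    calc ∑ i ∈ S.SL, f i ≤ S.SL.card • (S.P * (S.initAlign + S.crosstalk * S.peak t)) :=
          sum_le_card_nsmul _ _ _ fun i hi =>
            sum_noise_le (by positivity) fun j hj => hS i hi j hj r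
      _ ≤ S.N * (S.P * (S.initAlign + S.crosstalk * S.peak t)) := by
          rw [nsmul_eq_mul]
          gcongr
  have hSU : ∑ i ∈ S.SU, f i ≤
      S.SU.card * (S.P * (60 * Real.sqrt S.logHorizon * S.peak t)) := by
    rw [← nsmul_eq_mul]
    exact sum_le_card_nsmul _ _ _ fun k hk =>
      sum_noise_le (by positivity) fun q hq => hE.mul_rho_le_of_mem_SU hB hk hq r t
  calc S.noiseNorm ^ 2 * S.overlap * S.rhoSum r t
      = S.overlap * (∑ i ∈ S.SL, f i + ∑ i ∈ S.SU, f i) := by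
        rw [← sum_samples, rhoSum, noisePairs, sum_sigma]
        simp only [f, mul_sum]
        exact sum_congr rfl fun i _ => sum_congr rfl fun j _ => by ring
    _ ≤ S.overlap * (S.N * (S.P * (S.initAlign + S.crosstalk * S.peak t)) +
          S.SU.card * (S.P * (60 * Real.sqrt S.logHorizon * S.peak t))) := by gcongr
    _ = S.overlap * S.N * S.P * (S.initAlign + S.crosstalk * S.peak t) +
          S.crosstalk * S.peak t := by rw [crosstalk]; ring
    _ ≤ S.initAlign / 1000 + 2 * (S.crosstalk * S.peak t) := by
        have hκR := mul_nonneg hκ hR.le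
        linarith [mul_le_mul_of_nonneg_right hB.overlap_le (add_nonneg hι.le hκR)]

section Align

variable (hS : S.LearnableSmall t) (hD : S.ATDyn) (hE : S.EventE) (hB : S.Bounds C₁)
  {k : Fin S.N} {q : Fin S.P}

include hS hD hE hB

lemma abs_align_sub_le (hq : q ≠ S.sig k) (r : Fin S.m) :
    |S.align k q r t - (S.align k q r 0 + S.rho k q r t * sqnorm (S.x k q))| ≤
      S.initAlign / 1000 + 2 * (S.crosstalk * S.peak t) :=
  (hD.abs_align_sub_le hE.abs_dot_le (mul_nonneg (sq_nonneg _) S.overlap_nonneg) r k hq t).trans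
    (hS.overlap_mul_rhoSum_le hE hB r)

lemma abs_align_sub_rhoHat_le (hq : q ≠ S.sig k) (r : Fin S.m) :
    |S.align k q r t - S.rhoHat k q r t * sqnorm (S.x k q)| ≤ S.peak t / 100 := by
  rw [rhoHat_mul_sqnorm (hE.sqnorm_pos hq).ne']
  refine (hS.abs_align_sub_le hD hE hB hq r).trans ?_
  have hκ : S.crosstalk * S.peak t ≤ 1 / 1000 * S.peak t :=
    mul_le_mul_of_nonneg_right hB.crosstalk_le (hE.peak_pos hB t).le
  linarith [hE.initAlign_le_peak hB t, hE.peak_pos hB t]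

lemma abs_align_le_of_mem_SL (hk : k ∈ S.SL) (hq : q ≠ S.sig k) (r : Fin S.m) :
    |S.align k q r t| ≤
      8 * (Real.sqrt S.logHorizon * S.initAlign) + 4 * (S.crosstalk * S.peak t) := by
  have hι := S.initAlign_pos
  have hρ : S.rho k q r t * sqnorm (S.x k q) ≤
      3 / 2 * (S.initAlign + S.crosstalk * S.peak t) := by
    linarith [hS k hk q hq r,
      mul_le_mul_of_nonneg_left (hE.sqnorm_le hq) (rho_nonneg k q r t)]
  have hρ0 : 0 ≤ S.rho k q r t * sqnorm (S.x k q) :=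
    mul_nonneg (rho_nonneg k q r t) (hE.sqnorm_pos hq).le
  have hinit : |S.align k q r 0| ≤ 9 / 2 * (Real.sqrt S.logHorizon * S.initAlign) := by
    linarith [hE.abs_align_zero_le hq r,
      mul_le_mul_of_nonneg_right hB.sqrt_logInit_le hι.le]
  have hL : S.initAlign ≤ Real.sqrt S.logHorizon * S.initAlign :=
    le_mul_of_one_le_left hι.le hB.one_le_sqrt_logHorizon
  have hκ := mul_nonneg S.crosstalk_nonneg (hE.peak_pos hB t).le
  have hsub := abs_le.1 (hS.abs_align_sub_le hD hE hB hq r)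
  rw [abs_le] at hinit ⊢
  constructor <;> linarith [hsub.1, hsub.2, hinit.1, hinit.2]

lemma align_le_of_mem_SU (hk : k ∈ S.SU) (hq : q ≠ S.sig k) (r : Fin S.m) :
    S.align k q r t ≤ 31 / 20 * S.peak t := by
  have hR := hE.peak_pos hB t
  have hmax0 : 0 ≤ S.rhoHatMax t :=
    (pos_of_mul_pos_right hR (sq_nonneg _)).le
  have hmul : S.rhoHat k q r t * sqnorm (S.x k q) ≤ 3 / 2 * S.peak t := by
    calc S.rhoHat k q r t * sqnorm (S.x k q)
        ≤ S.rhoHatMax t * (3 / 2 * S.noiseNorm ^ 2) :=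
          mul_le_mul (rhoHat_le_rhoHatMax hk hq r t) (hE.sqnorm_le hq) (hE.sqnorm_pos hq).le hmax0
      _ = 3 / 2 * S.peak t := by rw [peak]; ring
  linarith [(abs_le.1 (hS.abs_align_sub_rhoHat_le hD hE hB hq r)).2]

lemma abs_align_le_of_mem_SU (hk : k ∈ S.SU) (hq : q ≠ S.sig k) (r : Fin S.m) :
    |S.align k q r t| ≤ 40 * (Real.sqrt S.logInit * S.peak t) := by
  have hR := hE.peak_pos hB t
  have hlog : S.peak t ≤ Real.sqrt S.logInit * S.peak t :=
    le_mul_of_one_le_left hR.le hB.one_le_sqrt_logInit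
  have hinit := (abs_le.1 (hE.abs_align_zero_le hq r)).1
  have hpeak : Real.sqrt S.logInit * S.initAlign ≤ Real.sqrt S.logInit * (6 * S.peak t) := by
    have := hE.initAlign_le_peak hB t
    gcongr
  have hsub := (abs_le.1 (hS.abs_align_sub_rhoHat_le hD hE hB hq r)).1
  rw [rhoHat_mul_sqnorm (hE.sqnorm_pos hq).ne'] at hsub
  have hρ0 : 0 ≤ S.rho k q r t * sqnorm (S.x k q) :=
    mul_nonneg (rho_nonneg k q r t) (hE.sqnorm_pos hq).le
  rw [abs_le]
  constructor <;> linarith [hS.align_le_of_mem_SU hD hE hB hk hq r]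

lemma le_align_of_rhoHat_eq (hq : q ≠ S.sig k) {r : Fin S.m}
    (hmax : S.rhoHat k q r t = S.rhoHatMax t) : 9 / 20 * S.peak t ≤ S.align k q r t := by
  have hR := hE.peak_pos hB t
  have hmax0 : 0 ≤ S.rhoHatMax t := (pos_of_mul_pos_right hR (sq_nonneg _)).le
  have hmul : S.peak t / 2 ≤ S.rhoHat k q r t * sqnorm (S.x k q) := by
    calc S.peak t / 2 = S.rhoHatMax t * (S.noiseNorm ^ 2 / 2) := by rw [peak]; ring
      _ ≤ S.rhoHat k q r t * sqnorm (S.x k q) := by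
          rw [hmax]
          exact mul_le_mul_of_nonneg_left (hE.le_sqnorm hq) hmax0
  linarith [(abs_le.1 (hS.abs_align_sub_rhoHat_le hD hE hB hq r)).1]

lemma rhoHatMax_succ_le :
    S.rhoHatMax (t + 1) ≤
      S.rhoHatMax t + 4800 * S.eta * S.logInit / S.N * S.peak t ^ 2 := by
  obtain ⟨r, k, hk, q, hq, h⟩ := exists_rhoHatMax_eq hB.two_le_P hB.nonempty_SU (t + 1)
  have hψ : 3 * S.eta / S.N * psi (S.marg t k) ≤ 3 * S.eta / S.N :=
    mul_le_of_le_one_right S.rate_nonneg (psi_le_one _)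
  have hsq : S.align k q r t ^ 2 ≤ 1600 * (S.logInit * S.peak t ^ 2) := by
    have hLI : 0 ≤ S.logInit := zero_le_one.trans hB.one_le_logInit
    calc S.align k q r t ^ 2 = |S.align k q r t| ^ 2 := (sq_abs _).symm
      _ ≤ (40 * (Real.sqrt S.logInit * S.peak t)) ^ 2 := by
          gcongr
          exact hS.abs_align_le_of_mem_SU hD hE hB hk hq r
      _ = 1600 * (S.logInit * S.peak t ^ 2) := by rw [mul_pow, mul_pow, Real.sq_sqrt hLI]; norm_num
  calc S.rhoHatMax (t + 1)
      = S.rhoHat k q r t + 3 * S.eta / S.N * psi (S.marg t k) * S.align k q r t ^ 2 := by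
        rw [h, rhoHat_succ]
    _ ≤ S.rhoHatMax t + 3 * S.eta / S.N * (1600 * (S.logInit * S.peak t ^ 2)) :=
        add_le_add (rhoHat_le_rhoHatMax hk hq r t)
          (mul_le_mul hψ hsq (sq_nonneg _) S.rate_nonneg)
    _ = S.rhoHatMax t + 4800 * S.eta * S.logInit / S.N * S.peak t ^ 2 := by ring

lemma peak_succ_le :
    S.peak (t + 1) ≤
      S.peak t + 4800 * S.eta * S.noiseNorm ^ 2 * S.logInit / S.N * S.peak t ^ 2 := by
  calc S.peak (t + 1)
      ≤ S.noiseNorm ^ 2 *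
          (S.rhoHatMax t + 4800 * S.eta * S.logInit / S.N * S.peak t ^ 2) :=
        mul_le_mul_of_nonneg_left (hS.rhoHatMax_succ_le hD hE hB) (sq_nonneg _)
    _ = S.peak t + 4800 * S.eta * S.noiseNorm ^ 2 * S.logInit / S.N * S.peak t ^ 2 := by
        rw [mul_add, ← peak]; ring

section BelowThreshold

variable (hthr : S.BelowThreshold C₁ t)

include hthr

lemma marg_le_of_mem_SU (hk : k ∈ S.SU) : S.marg t k ≤ 4 * C₁ ^ 3 := by
  have hR := hE.peak_pos hB t
  have hmP : (0 : ℝ) ≤ S.m * S.P := by positivity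
  have hcube := mul_pow_three_le_of_rpow_third_mul_le hmP hthr
  calc S.marg t k = S.noiseMargin t k := marg_of_mem_SU t hk
    _ ≤ S.m * S.P * (31 / 20 * S.peak t) ^ 3 :=
        noiseMargin_le (by positivity) fun q hq r => hS.align_le_of_mem_SU hD hE hB hk hq r
    _ = (31 / 20) ^ 3 * (S.m * S.P * S.peak t ^ 3) := by ring
    _ ≤ 4 * (S.m * S.P * S.peak t ^ 3) := by
        gcongr
        norm_num
    _ ≤ 4 * C₁ ^ 3 := by linarith

lemma abs_noiseMargin_le_one (hk : k ∈ S.SL) : |S.noiseMargin t k| ≤ 1 := by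
  have hmP : (0 : ℝ) ≤ S.m * S.P := by positivity
  have hι := S.initAlign_pos
  have hR := hE.peak_pos hB t
  have hκ := S.crosstalk_nonneg
  have hsmall : ((S.m : ℝ) * S.P) ^ ((1 : ℝ) / 3) *
      (8 * (Real.sqrt S.logHorizon * S.initAlign) + 4 * (S.crosstalk * S.peak t)) ≤ 1 := by
    linarith [hB.initAlign_le, hB.crosstalk_mul_le, mul_le_mul_of_nonneg_left hthr hκ]
  calc |S.noiseMargin t k|
      ≤ S.m * S.P * (8 * (Real.sqrt S.logHorizon * S.initAlign) +
          4 * (S.crosstalk * S.peak t)) ^ 3 :=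
        abs_noiseMargin_le (by positivity) fun q hq r =>
          hS.abs_align_le_of_mem_SL hD hE hB hk hq r
    _ ≤ 1 ^ 3 := mul_pow_three_le_of_rpow_third_mul_le hmP hsmall
    _ = 1 := one_pow 3

lemma le_rhoHatMax_succ :
    S.rhoHatMax t + S.eta / (3 * S.N * (1 + Real.exp (4 * C₁ ^ 3))) * S.peak t ^ 2 ≤
      S.rhoHatMax (t + 1) := by
  obtain ⟨r, k, hk, q, hq, h⟩ := exists_rhoHatMax_eq hB.two_le_P hB.nonempty_SU t
  have hR := hE.peak_pos hB t
  have hη := S.heta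
  have hψ : psi (4 * C₁ ^ 3) ≤ psi (S.marg t k) :=
    psi_antitone (hS.marg_le_of_mem_SU hD hE hB hthr hk)
  have := psi_nonneg (4 * C₁ ^ 3)
  have := S.rate_nonneg
  calc S.rhoHatMax t + S.eta / (3 * S.N * (1 + Real.exp (4 * C₁ ^ 3))) * S.peak t ^ 2
      = S.rhoHatMax t + 3 * S.eta / S.N * psi (4 * C₁ ^ 3) * (1 / 3 * S.peak t) ^ 2 := by
        rw [psi]; field_simp
    _ ≤ S.rhoHatMax t + 3 * S.eta / S.N * psi (S.marg t k) * S.align k q r t ^ 2 := by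
        have hψk := psi_nonneg (S.marg t k)
        gcongr
        linarith [hS.le_align_of_rhoHat_eq hD hE hB hq h.symm]
    _ = S.rhoHat k q r (t + 1) := by rw [h, rhoHat_succ]
    _ ≤ S.rhoHatMax (t + 1) := rhoHat_le_rhoHatMax hk hq r (t + 1)

end BelowThreshold

end Align

end LearnableSmall

/-! ### Signal learning -/

lemma Bounds.half_alpha_le_advSignal {C₁ : ℝ} (hB : S.Bounds C₁) (t : ℕ) {i : Fin S.N}
    (hi : i ∈ S.SL) : S.alpha / 2 ≤ S.advSignal t i := by
  have h : S.alpha - S.eps ≤ S.advSignal t i := (S.hadvlearn t i hi).1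
  linarith [hB.eps_le]

lemma advSignal_le (t : ℕ) {i : Fin S.N} (hi : i ∈ S.SL) : S.advSignal t i ≤ S.alpha :=
  (S.hadvlearn t i hi).2

lemma Bounds.advSignal_nonneg {C₁ : ℝ} (hB : S.Bounds C₁) (t : ℕ) {i : Fin S.N}
    (hi : i ∈ S.SL) : 0 ≤ S.advSignal t i :=
  (half_pos S.halpha).le.trans (hB.half_alpha_le_advSignal t hi)

lemma Bounds.psi_mul_advSignal_nonneg {C₁ : ℝ} (hB : S.Bounds C₁) (t : ℕ) {i : Fin S.N}
    (hi : i ∈ S.SL) : 0 ≤ psi (S.marg t i) * S.advSignal t i ^ 3 :=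
  mul_nonneg (psi_nonneg _) (pow_nonneg (hB.advSignal_nonneg t hi) 3)

lemma Bounds.signalRate_nonneg {C₁ : ℝ} (hB : S.Bounds C₁) (t : ℕ) : 0 ≤ S.signalRate t :=
  mul_nonneg S.rate_nonneg (sum_nonneg fun _ hi => hB.psi_mul_advSignal_nonneg t hi)

lemma Bounds.signalRate_le {C₁ : ℝ} (hB : S.Bounds C₁) {t : ℕ} {b : ℝ} (hb : 0 ≤ b)
    (h : ∀ i ∈ S.SL, psi (S.marg t i) ≤ b) : S.signalRate t ≤ 3 * (S.eta * S.alpha ^ 3) * b := by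
  have hη := S.heta
  have hα := S.halpha
  have hN : (0 : ℝ) < S.N := Nat.cast_pos.2 S.hN
  have hcard : (S.SL.card : ℝ) ≤ S.N := by exact_mod_cast card_finset_fin_le S.SL
  have hterm : ∀ i ∈ S.SL, psi (S.marg t i) * S.advSignal t i ^ 3 ≤ b * S.alpha ^ 3 :=
    fun i hi => mul_le_mul (h i hi)
      (pow_le_pow_left₀ (hB.advSignal_nonneg t hi) (advSignal_le t hi) 3)
      (pow_nonneg (hB.advSignal_nonneg t hi) 3) hb
  calc S.signalRate t ≤ 3 * S.eta / S.N * (S.SL.card • (b * S.alpha ^ 3)) :=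
        mul_le_mul_of_nonneg_left (sum_le_card_nsmul _ _ _ hterm) S.rate_nonneg
    _ ≤ 3 * S.eta / S.N * (S.N * (b * S.alpha ^ 3)) := by
        rw [nsmul_eq_mul]
        gcongr
    _ = 3 * (S.eta * S.alpha ^ 3) * b := by field_simp

lemma Bounds.le_signalRate {C₁ : ℝ} (hB : S.Bounds C₁) {t : ℕ} {b : ℝ} (hb : 0 ≤ b)
    (h : ∀ i ∈ S.SL, b ≤ psi (S.marg t i)) :
    3 / 16 * (S.eta * S.alpha ^ 3) * b ≤ S.signalRate t := by
  have hη := S.heta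
  have hα := S.halpha
  have hN : (0 : ℝ) < S.N := Nat.cast_pos.2 S.hN
  have hterm : ∀ i ∈ S.SL, b * (S.alpha / 2) ^ 3 ≤ psi (S.marg t i) * S.advSignal t i ^ 3 :=
    fun i hi => by
      have := hB.half_alpha_le_advSignal t hi
      have hψ := psi_nonneg (S.marg t i)
      gcongr
      exact h i hi
  calc 3 / 16 * (S.eta * S.alpha ^ 3) * b
      = 3 * S.eta / S.N * (S.N / 2 * (b * (S.alpha / 2) ^ 3)) := by field_simp; ring
    _ ≤ 3 * S.eta / S.N * (S.SL.card • (b * (S.alpha / 2) ^ 3)) := by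
        rw [nsmul_eq_mul]
        gcongr
        linarith [hB.N_le]
    _ ≤ S.signalRate t :=
        mul_le_mul_of_nonneg_left (card_nsmul_le_sum _ _ _ hterm) S.rate_nonneg

lemma Bounds.rate_mul_psi_le {C₁ : ℝ} (hB : S.Bounds C₁) (t : ℕ) {i : Fin S.N} (hi : i ∈ S.SL) :
    3 * S.eta / S.N * psi (S.marg t i) ≤ 8 / S.alpha ^ 3 * S.signalRate t := by
  have hα := S.halpha
  have hη := S.rate_nonneg
  have hψ := psi_nonneg (S.marg t i)
  calc 3 * S.eta / S.N * psi (S.marg t i)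
      = 8 / S.alpha ^ 3 * (3 * S.eta / S.N * (psi (S.marg t i) * (S.alpha / 2) ^ 3)) := by
        field_simp; norm_num
    _ ≤ 8 / S.alpha ^ 3 * (3 * S.eta / S.N * (psi (S.marg t i) * S.advSignal t i ^ 3)) := by
        gcongr
        exact hB.half_alpha_le_advSignal t hi
    _ ≤ 8 / S.alpha ^ 3 * S.signalRate t := by
        rw [signalRate]
        gcongr
        exact single_le_sum (f := fun i => psi (S.marg t i) * S.advSignal t i ^ 3)
          (fun _ hk => hB.psi_mul_advSignal_nonneg t hk) hi

/-- The signal level at which the `m` neurons start to produce margins of constant order. -/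
def level (S : Setting) : ℝ := 1 / (S.alpha * (S.m : ℝ) ^ ((1 : ℝ) / 3))

lemma level_pos (S : Setting) : 0 < S.level := by
  have hα := S.halpha
  have hm : (0 : ℝ) < S.m := Nat.cast_pos.2 S.hm
  unfold level
  positivity

lemma mul_pow_three_le_one_of_le_level {z : ℝ} (hz : z ≤ S.level) :
    S.m * (S.alpha * z) ^ 3 ≤ 1 := by
  have hα := S.halpha
  have hm : (0 : ℝ) < (S.m : ℝ) ^ ((1 : ℝ) / 3) := Real.rpow_pos_of_pos (Nat.cast_pos.2 S.hm) _
  have hle : (S.m : ℝ) ^ ((1 : ℝ) / 3) * (S.alpha * z) ≤ 1 := by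
    calc (S.m : ℝ) ^ ((1 : ℝ) / 3) * (S.alpha * z) = z * (S.alpha * S.m ^ ((1 : ℝ) / 3)) := by ring
      _ ≤ 1 := (le_div_iff₀ (mul_pos hα hm)).1 hz
  simpa using mul_pow_three_le_of_rpow_third_mul_le (Nat.cast_nonneg _) hle

/-- Neuron `r₀` leads the signal learning at iteration `t`: it has the largest signal coordinate,
which is positive, and no signal coordinate is more negative than at initialization. -/
structure Leading (S : Setting) (r₀ : Fin S.m) (t : ℕ) : Prop where
  pos : 0 < S.wsig t r₀
  le : ∀ r, S.wsig t r ≤ S.wsig t r₀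
  neg_le : ∀ r, -(4 * (S.sigma0 * S.logHorizon)) ≤ S.wsig t r

lemma EventE.exists_leading {C₁ : ℝ} (hE : S.EventE) (hB : S.Bounds C₁) :
    ∃ r₀, S.sigma0 / 2 ≤ S.wsig 0 r₀ ∧ S.Leading r₀ 0 := by
  obtain ⟨r, hr⟩ := hE.exists_le_wsig_zero
  obtain ⟨r₀, -, hmax⟩ := exists_max_image univ (S.wsig 0) ⟨r, mem_univ r⟩
  have hr₀ : S.sigma0 / 2 ≤ S.wsig 0 r₀ := hr.trans (hmax r (mem_univ r))
  exact ⟨r₀, hr₀, (half_pos S.hsigma0).trans_le hr₀, fun r => hmax r (mem_univ r),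
    fun r => (abs_le.1 (hE.abs_wsig_zero_le hB r)).1⟩

namespace Leading

variable {C₁ : ℝ} {r₀ : Fin S.m} {t : ℕ}

lemma succ (h : S.Leading r₀ t) (hD : S.ATDyn) (hB : S.Bounds C₁) : S.Leading r₀ (t + 1) := by
  have hg := hB.signalRate_nonneg t
  have hmono : ∀ r, S.wsig t r ≤ S.wsig (t + 1) r := fun r => by
    rw [hD.wsig_succ]
    exact le_add_of_nonneg_right (mul_nonneg hg (sq_nonneg _))
  have hsmall : S.signalRate t * (4 * (S.sigma0 * S.logHorizon)) ≤ 1 := by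
    have hL : 0 ≤ S.sigma0 * S.logHorizon :=
      mul_nonneg S.hsigma0.le (zero_le_one.trans hB.one_le_logHorizon)
    have hrate := hB.signalRate_le zero_le_one fun i _ => psi_le_one (S.marg t i)
    linarith [mul_le_mul_of_nonneg_right hrate hL, hB.eta_mul_sigma0_le, mul_nonneg hg hL]
  refine ⟨h.pos.trans_le (hmono r₀), fun r => ?_, fun r => (h.neg_le r).trans (hmono r)⟩
  rw [hD.wsig_succ, hD.wsig_succ]
  refine add_mul_sq_le_add_mul_sq (h.le r) ?_
  have hsum : -(4 * (S.sigma0 * S.logHorizon)) ≤ S.wsig t r + S.wsig t r₀ := by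
    linarith [h.neg_le r, h.pos]
  linarith [mul_le_mul_of_nonneg_left hsum hg]

lemma isQuadraticGrowth (h : S.Leading r₀ 0) (hD : S.ATDyn) (hB : S.Bounds C₁) :
    IsQuadraticGrowth (fun s => S.wsig s r₀) S.signalRate where
  zero_pos := h.pos
  rate_nonneg := hB.signalRate_nonneg
  succ_eq s := hD.wsig_succ s r₀

section Margin

variable (h : S.Leading r₀ t) (hB : S.Bounds C₁)
  (hnoise : ∀ i ∈ S.SL, |S.noiseMargin t i| ≤ 1) {i : Fin S.N}

include h hB hnoise

lemma marg_le (hi : i ∈ S.SL) :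
    S.marg t i ≤ S.m * (S.alpha * S.wsig t r₀) ^ 3 + 1 := by
  have ha := hB.advSignal_nonneg t hi
  have hterm : ∀ r, (S.advSignal t i * S.wsig t r) ^ 3 ≤ (S.alpha * S.wsig t r₀) ^ 3 := fun r =>
    (Odd.pow_le_pow (by decide)).2 <|
      (mul_le_mul_of_nonneg_left (h.le r) ha).trans
        (mul_le_mul_of_nonneg_right (advSignal_le t hi) h.pos.le)
  rw [marg_of_mem_SL t hi]
  refine add_le_add ?_ (le_of_abs_le (hnoise i hi))
  simpa using sum_le_card_nsmul univ _ _ fun r _ => hterm r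

lemma le_marg (hi : i ∈ S.SL) :
    (S.alpha * S.wsig t r₀) ^ 3 / 8 - 2 ≤ S.marg t i := by
  have hα := S.halpha
  have ha := hB.half_alpha_le_advSignal t hi
  have ha0 := hB.advSignal_nonneg t hi
  have hpos := h.pos
  have hs : 0 ≤ S.sigma0 * S.logHorizon :=
    mul_nonneg S.hsigma0.le (zero_le_one.trans hB.one_le_logHorizon)
  have hc : 0 ≤ S.alpha * (4 * (S.sigma0 * S.logHorizon)) := by positivity
  have hmc : S.m * (S.alpha * (4 * (S.sigma0 * S.logHorizon))) ^ 3 ≤ 1 := by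
    simpa using mul_pow_three_le_of_rpow_third_mul_le (c := 1) (Nat.cast_nonneg S.m)
      (by linarith [hB.alpha_mul_sigma0_le])
  have hlead : (S.alpha * S.wsig t r₀) ^ 3 / 8 ≤ (S.advSignal t i * S.wsig t r₀) ^ 3 := by
    calc (S.alpha * S.wsig t r₀) ^ 3 / 8 = (S.alpha / 2 * S.wsig t r₀) ^ 3 := by ring
      _ ≤ (S.advSignal t i * S.wsig t r₀) ^ 3 := by gcongr
  have hneg : ∀ r, -(S.alpha * (4 * (S.sigma0 * S.logHorizon))) ≤ S.advSignal t i * S.wsig t r :=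
    fun r => by
      linarith [mul_le_mul_of_nonneg_left (h.neg_le r) ha0,
        mul_le_mul_of_nonneg_right (advSignal_le t hi) hs]
  have hsum := pow_three_sub_le_sum_pow_three hc hneg r₀
  rw [Fintype.card_fin] at hsum
  rw [marg_of_mem_SL t hi]
  linarith [(abs_le.1 (hnoise i hi)).1]

lemma signalRate_mul_wsig_le_one : S.signalRate t * S.wsig t r₀ ≤ 1 := by
  set z := S.alpha * S.wsig t r₀ with hz
  have hη := S.heta
  have hα := S.halpha
  have hψ : ∀ i ∈ S.SL, psi (S.marg t i) ≤ 15 / 2 * Real.exp (-(z ^ 3 / 8)) := fun i hi => by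
    calc psi (S.marg t i) ≤ psi (z ^ 3 / 8 - 2) := psi_antitone (h.le_marg hB hnoise hi)
      _ ≤ Real.exp (-(z ^ 3 / 8 - 2)) := psi_le_exp_neg _
      _ = Real.exp 2 * Real.exp (-(z ^ 3 / 8)) := by rw [← Real.exp_add]; ring_nf
      _ ≤ 15 / 2 * Real.exp (-(z ^ 3 / 8)) := by gcongr; exact exp_two_lt.le
  calc S.signalRate t * S.wsig t r₀
      ≤ 3 * (S.eta * S.alpha ^ 3) * (15 / 2 * Real.exp (-(z ^ 3 / 8))) * S.wsig t r₀ :=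
        mul_le_mul_of_nonneg_right (hB.signalRate_le (by positivity) hψ) h.pos.le
    _ = 45 / 2 * (S.eta * S.alpha ^ 2) * (z * Real.exp (-(z ^ 3 / 8))) := by rw [hz]; ring
    _ ≤ 45 / 2 * (S.eta * S.alpha ^ 2) * 2 := by
        gcongr
        exact mul_exp_neg_cube_le z
    _ ≤ 1 := by linarith [hB.eta_mul_alpha_sq_le, mul_pos hη (pow_pos hα 2)]

lemma le_signalRate_of_le_level (hlevel : S.wsig t r₀ ≤ S.level) :
    S.eta * S.alpha ^ 3 / 48 ≤ S.signalRate t := by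
  have hψ : ∀ i ∈ S.SL, 1 / 9 ≤ psi (S.marg t i) := fun i hi => by
    have hmarg : S.marg t i ≤ 2 := by
      linarith [h.marg_le hB hnoise hi, mul_pow_three_le_one_of_le_level hlevel]
    calc 1 / 9 ≤ psi 2 := one_div_le_one_div_of_le (by positivity) (by linarith [exp_two_lt])
      _ ≤ psi (S.marg t i) := psi_antitone hmarg
  linarith [hB.le_signalRate (by norm_num) hψ]

end Margin

end Leading

/-! ### Propagation of noise stability -/

section Propagation

variable {C₁ : ℝ} {t : ℕ}

lemma ATDyn.leading (hD : S.ATDyn) (hB : S.Bounds C₁) {r₀ : Fin S.m} (h : S.Leading r₀ 0)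
    (t : ℕ) : S.Leading r₀ t := by
  induction t with
  | zero => exact h
  | succ t ih => exact ih.succ hD hB

/-- The signal-learning time: neuron `r₀` stays below `level` before iteration `n`, and above
`level` between `n` and `t`. -/
structure IsLearningTime (S : Setting) (r₀ : Fin S.m) (t n : ℕ) : Prop where
  le : n ≤ t
  le_level : ∀ s < n, S.wsig s r₀ ≤ S.level
  level_lt : ∀ s ∈ Ico n t, S.level < S.wsig s r₀

namespace IsLearningTime

variable {r₀ : Fin S.m} {n : ℕ}

section Rates

variable (hn : S.IsLearningTime r₀ t n) (hD : S.ATDyn) (hE : S.EventE) (hB : S.Bounds C₁)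
  (hthr : S.BelowThreshold C₁ t) (hS : ∀ s < t, S.LearnableSmall s)
  (hr₀ : S.Leading r₀ 0)

include hn hD hE hB hthr hS hr₀

lemma mul_eta_le (hinit : S.sigma0 / 2 ≤ S.wsig 0 r₀) :
    n * (S.eta * S.alpha ^ 3 * S.sigma0) ≤ 192 := by
  have hσ := S.hsigma0
  have hnoise : ∀ s < n, ∀ i ∈ S.SL, |S.noiseMargin s i| ≤ 1 := fun s hs i hi =>
    (hS s (hs.trans_le hn.le)).abs_noiseMargin_le_one hD hE hB
      (hthr.mono hB (hs.le.trans hn.le)) hi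
  have hgrowth := hr₀.isQuadraticGrowth hD hB
  have hlower : n * (S.eta * S.alpha ^ 3 / 48) ≤ ∑ s ∈ Ico 0 n, S.signalRate s := by
    have := card_nsmul_le_sum (Ico 0 n) S.signalRate _ fun s hs =>
      (hD.leading hB hr₀ s).le_signalRate_of_le_level hB (hnoise s (mem_Ico.1 hs).2)
        (hn.le_level s (mem_Ico.1 hs).2)
    simpa using this
  have hupper : ∑ s ∈ Ico 0 n, S.signalRate s ≤ 4 / S.sigma0 := by
    calc ∑ s ∈ Ico 0 n, S.signalRate s ≤ 2 / S.wsig 0 r₀ :=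
          hgrowth.sum_rate_Ico_le n.zero_le fun s hs =>
            (hD.leading hB hr₀ s).signalRate_mul_wsig_le_one hB (hnoise s (mem_Ico.1 hs).2)
      _ ≤ 2 / (S.sigma0 / 2) := by gcongr
      _ = 4 / S.sigma0 := by ring
  have := (le_div_iff₀ hσ).1 (hlower.trans hupper)
  linarith

lemma sum_signalRate_le :
    ∑ s ∈ Ico n t, S.signalRate s ≤ 2 * (S.alpha * (S.m : ℝ) ^ ((1 : ℝ) / 3)) := by
  have hsmall : ∀ s ∈ Ico n t, S.signalRate s * S.wsig s r₀ ≤ 1 := fun s hs => by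
    have hst := (mem_Ico.1 hs).2
    exact (hD.leading hB hr₀ s).signalRate_mul_wsig_le_one hB fun i hi =>
      (hS s hst).abs_noiseMargin_le_one hD hE hB (hthr.mono hB hst.le) hi
  calc ∑ s ∈ Ico n t, S.signalRate s ≤ 2 / S.level :=
        (hr₀.isQuadraticGrowth hD hB).sum_rate_Ico_le_of_lt hn.le hsmall S.level_pos hn.level_lt
    _ = 2 * (S.alpha * (S.m : ℝ) ^ ((1 : ℝ) / 3)) := by rw [level, div_div_eq_mul_div, div_one]

end Rates

end IsLearningTime

lemma Bounds.mul_eta_mul_noiseNorm_le {n : ℕ} (hB : S.Bounds C₁)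
    (hn : n * (S.eta * S.alpha ^ 3 * S.sigma0) ≤ 192) :
    5 * 10 ^ 6 * (n * (S.eta * S.sigma0 * S.noiseNorm ^ 3 / S.N) * S.logHorizon ^ 2) ≤ 1 := by
  have hα := S.halpha
  have hQ := S.noiseNorm_pos
  have hN : (0 : ℝ) < S.N := Nat.cast_pos.2 S.hN
  have hratio : 10 ^ 9 * S.logHorizon ^ 2 * S.noiseNorm ^ 3 / (S.N * S.alpha ^ 3) ≤ 1 :=
    div_le_one_of_le₀ hB.noiseNorm_pow_le (by positivity)
  calc 5 * 10 ^ 6 * (n * (S.eta * S.sigma0 * S.noiseNorm ^ 3 / S.N) * S.logHorizon ^ 2)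
      = n * (S.eta * S.alpha ^ 3 * S.sigma0) *
          (10 ^ 9 * S.logHorizon ^ 2 * S.noiseNorm ^ 3 / (S.N * S.alpha ^ 3)) / 200 := by
        field_simp; ring
    _ ≤ 192 * 1 / 200 := by gcongr
    _ ≤ 1 := by norm_num

section EarlyPhase

variable {n : ℕ} (hD : S.ATDyn) (hE : S.EventE) (hB : S.Bounds C₁)
  (hn : n * (S.eta * S.alpha ^ 3 * S.sigma0) ≤ 192) (hS : ∀ s < n, S.LearnableSmall s)

include hD hE hB hn hS

lemma peak_le_of_mul_eta_le : S.peak n ≤ 18 * (Real.sqrt S.logHorizon * S.initAlign) := by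
  have hη := S.heta
  have hσ := S.hsigma0
  have hι := S.initAlign_pos
  have hQ := S.noiseNorm_pos
  have hN : (0 : ℝ) < S.N := Nat.cast_pos.2 S.hN
  have hL := hB.one_le_logHorizon
  have hLI : 0 ≤ S.logInit := zero_le_one.trans hB.one_le_logInit
  have hlog : S.logInit * Real.sqrt S.logInit ≤ 45 / 4 * S.logHorizon ^ 2 := by
    calc S.logInit * Real.sqrt S.logInit
        ≤ 5 * S.logHorizon * (9 / 4 * Real.sqrt S.logHorizon) := by
          have := hB.logInit_le
          have := hB.sqrt_logInit_le
          gcongr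
      _ ≤ 5 * S.logHorizon * (9 / 4 * S.logHorizon) := by
          gcongr
          exact (Real.sqrt_le_left (by linarith)).2 (le_self_pow₀ hL two_ne_zero)
      _ = 45 / 4 * S.logHorizon ^ 2 := by ring
  have hdouble :
      n * (4 * (4800 * S.eta * S.noiseNorm ^ 2 * S.logInit / S.N) * S.peak 0) ≤ 1 := by
    calc n * (4 * (4800 * S.eta * S.noiseNorm ^ 2 * S.logInit / S.N) * S.peak 0)
        ≤ n * (4 * (4800 * S.eta * S.noiseNorm ^ 2 * S.logInit / S.N) *
            (4 * Real.sqrt S.logInit * S.initAlign)) := by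
          have := hE.peak_zero_le hB
          gcongr
      _ = 76800 * (n * (S.eta * S.sigma0 * S.noiseNorm ^ 3 / S.N) *
            (S.logInit * Real.sqrt S.logInit)) := by rw [initAlign]; ring
      _ ≤ 76800 * (n * (S.eta * S.sigma0 * S.noiseNorm ^ 3 / S.N) *
            (45 / 4 * S.logHorizon ^ 2)) := by gcongr
      _ ≤ 1 := by linarith [hB.mul_eta_mul_noiseNorm_le hn]
  have hgrowth := le_two_mul_of_quadratic_growth (by positivity) (fun s => (hE.peak_pos hB s).le)
    (fun s hs => (hS s hs).peak_succ_le hD hE hB) hdouble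
  linarith [hE.peak_zero_le hB, mul_le_mul_of_nonneg_right hB.sqrt_logInit_le hι.le]

lemma align_sq_le_of_lt {s : ℕ} (hs : s < n) {k : Fin S.N} (hk : k ∈ S.SL) {q : Fin S.P}
    (hq : q ≠ S.sig k) (r : Fin S.m) :
    S.align k q r s ^ 2 ≤ 81 * (S.logHorizon * S.initAlign ^ 2) := by
  have hι := S.initAlign_pos
  have hL : 0 ≤ S.logHorizon := zero_le_one.trans hB.one_le_logHorizon
  have hpeak : S.crosstalk * S.peak s ≤
      1 / 1000 * (18 * (Real.sqrt S.logHorizon * S.initAlign)) :=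
    mul_le_mul hB.crosstalk_le
      ((hB.peak_monotone hs.le).trans (peak_le_of_mul_eta_le hD hE hB hn hS))
      (hE.peak_pos hB s).le (by norm_num)
  have halign : |S.align k q r s| ≤ 9 * (Real.sqrt S.logHorizon * S.initAlign) := by
    linarith [(hS s hs).abs_align_le_of_mem_SL hD hE hB hk hq r,
      mul_nonneg (Real.sqrt_nonneg S.logHorizon) hι.le]
  calc S.align k q r s ^ 2 = |S.align k q r s| ^ 2 := (sq_abs _).symm
    _ ≤ (9 * (Real.sqrt S.logHorizon * S.initAlign)) ^ 2 := by gcongr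
    _ = 81 * (S.logHorizon * S.initAlign ^ 2) := by
        rw [mul_pow, mul_pow, Real.sq_sqrt hL]; norm_num

lemma mul_rho_le_half_initAlign {k : Fin S.N} (hk : k ∈ S.SL) {q : Fin S.P}
    (hq : q ≠ S.sig k) (r : Fin S.m) : S.noiseNorm ^ 2 * S.rho k q r n ≤ S.initAlign / 2 := by
  have hη := S.heta
  have hσ := S.hsigma0
  have hι := S.initAlign_pos
  have hQ := S.noiseNorm_pos
  have hL := hB.one_le_logHorizon
  have hterm : ∀ s ∈ range n, 3 * S.eta / S.N * psi (S.marg s k) * S.align k q r s ^ 2 ≤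
      3 * S.eta / S.N * (81 * (S.logHorizon * S.initAlign ^ 2)) := fun s hs =>
    mul_le_mul (mul_le_of_le_one_right S.rate_nonneg (psi_le_one _))
      (align_sq_le_of_lt hD hE hB hn hS (mem_range.1 hs) hk hq r) (sq_nonneg _) S.rate_nonneg
  calc S.noiseNorm ^ 2 * S.rho k q r n
      ≤ S.noiseNorm ^ 2 *
          (n * (3 * S.eta / S.N * (81 * (S.logHorizon * S.initAlign ^ 2)))) := by
        rw [rho_eq_sum]
        gcongr
        simpa using sum_le_card_nsmul _ _ _ hterm
    _ = 243 * (n * (S.eta * S.sigma0 * S.noiseNorm ^ 3 / S.N) * S.logHorizon) *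
          S.initAlign := by
        nth_rewrite 1 [initAlign]
        rw [initAlign]
        ring
    _ ≤ 243 * (n * (S.eta * S.sigma0 * S.noiseNorm ^ 3 / S.N) * S.logHorizon ^ 2) *
          S.initAlign := by
        gcongr
        exact le_self_pow₀ hL two_ne_zero
    _ ≤ 1 / 2 * S.initAlign := by
        gcongr
        linarith [hB.mul_eta_mul_noiseNorm_le hn]
    _ = S.initAlign / 2 := by ring

end EarlyPhase

lemma BelowThreshold.rpow_third_mul_peak_le (h : S.BelowThreshold C₁ t) (hE : S.EventE)
    (hB : S.Bounds C₁) : (S.m : ℝ) ^ ((1 : ℝ) / 3) * S.peak t ≤ C₁ := by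
  have hP : (1 : ℝ) ≤ S.P := Nat.one_le_cast.2 S.hP
  refine (mul_le_mul_of_nonneg_right ?_ (hE.peak_pos hB t).le).trans h
  gcongr
  exact le_mul_of_one_le_right (Nat.cast_nonneg _) hP

lemma BelowThreshold.growth_le (h : S.BelowThreshold C₁ t) (hE : S.EventE) (hB : S.Bounds C₁) :
    16 * (S.m : ℝ) ^ ((1 : ℝ) / 3) * S.noiseNorm ^ 2 *
        (128 * (S.logHorizon * S.initAlign ^ 2) + 32 * (S.crosstalk * S.peak t) ^ 2) ≤
      S.alpha ^ 2 * (S.initAlign / 2 + S.crosstalk * S.peak t) := by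
  have hκR := mul_nonneg S.crosstalk_nonneg (hE.peak_pos hB t).le
  have hinit := mul_le_mul_of_nonneg_right hB.initAlign_mul_sq_le S.initAlign_pos.le
  have hthr : S.crosstalk * ((S.m : ℝ) ^ ((1 : ℝ) / 3) * S.peak t) ≤ S.crosstalk * C₁ :=
    mul_le_mul_of_nonneg_left (h.rpow_third_mul_peak_le hE hB) S.crosstalk_nonneg
  have hcross : 512 * (S.crosstalk * ((S.m : ℝ) ^ ((1 : ℝ) / 3) * S.peak t)) *
      S.noiseNorm ^ 2 ≤ S.alpha ^ 2 := le_trans (by gcongr) hB.crosstalk_mul_sq_le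
  linarith [mul_le_mul_of_nonneg_right hcross hκR]

lemma mul_rho_sub_rho_le {n : ℕ} (hnt : n ≤ t) (hD : S.ATDyn) (hE : S.EventE)
    (hB : S.Bounds C₁) (hthr : S.BelowThreshold C₁ t) (hS : ∀ s < t, S.LearnableSmall s)
    (hrate : ∑ s ∈ Ico n t, S.signalRate s ≤ 2 * (S.alpha * (S.m : ℝ) ^ ((1 : ℝ) / 3)))
    {k : Fin S.N} (hk : k ∈ S.SL) {q : Fin S.P} (hq : q ≠ S.sig k) (r : Fin S.m) :
    S.noiseNorm ^ 2 * (S.rho k q r t - S.rho k q r n) ≤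
      S.initAlign / 2 + S.crosstalk * S.peak t := by
  have hα := S.halpha
  have hι := S.initAlign_pos
  have hκ := S.crosstalk_nonneg
  have hL : 0 ≤ S.logHorizon := zero_le_one.trans hB.one_le_logHorizon
  set b := 128 * (S.logHorizon * S.initAlign ^ 2) + 32 * (S.crosstalk * S.peak t) ^ 2 with hb
  have halign : ∀ s ∈ Ico n t, S.align k q r s ^ 2 ≤ b := fun s hs => by
    have hst := (mem_Ico.1 hs).2
    have hpeak : S.crosstalk * S.peak s ≤ S.crosstalk * S.peak t :=
      mul_le_mul_of_nonneg_left (hB.peak_monotone hst.le) hκ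
    calc S.align k q r s ^ 2 = |S.align k q r s| ^ 2 := (sq_abs _).symm
      _ ≤ (8 * (Real.sqrt S.logHorizon * S.initAlign) + 4 * (S.crosstalk * S.peak t)) ^ 2 := by
          gcongr
          linarith [(hS s hst).abs_align_le_of_mem_SL hD hE hB hk hq r]
      _ ≤ 2 * ((8 * (Real.sqrt S.logHorizon * S.initAlign)) ^ 2 +
            (4 * (S.crosstalk * S.peak t)) ^ 2) := add_sq_le
      _ = b := by rw [hb, mul_pow 8, mul_pow (√_), Real.sq_sqrt hL]; ring
  have : 0 ≤ b := by positivity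
  calc S.noiseNorm ^ 2 * (S.rho k q r t - S.rho k q r n)
      ≤ S.noiseNorm ^ 2 * ∑ s ∈ Ico n t, 8 / S.alpha ^ 3 * S.signalRate s * b := by
        rw [rho_sub_rho_eq_sum k q r hnt]
        refine mul_le_mul_of_nonneg_left (sum_le_sum fun s hs => ?_) (sq_nonneg _)
        exact mul_le_mul (hB.rate_mul_psi_le s hk) (halign s hs) (sq_nonneg _)
          (mul_nonneg (by positivity) (hB.signalRate_nonneg s))
    _ = S.noiseNorm ^ 2 * (8 / S.alpha ^ 3 * (∑ s ∈ Ico n t, S.signalRate s) * b) := by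
        rw [← sum_mul, ← mul_sum]
    _ ≤ S.noiseNorm ^ 2 *
          (8 / S.alpha ^ 3 * (2 * (S.alpha * (S.m : ℝ) ^ ((1 : ℝ) / 3))) * b) := by gcongr
    _ = 16 * (S.m : ℝ) ^ ((1 : ℝ) / 3) * S.noiseNorm ^ 2 * b / S.alpha ^ 2 := by
        field_simp; ring
    _ ≤ S.initAlign / 2 + S.crosstalk * S.peak t :=
        div_le_of_le_mul₀ (sq_nonneg _) (by have := hE.peak_pos hB t; positivity)
          (mul_comm _ (S.alpha ^ 2) ▸ hthr.growth_le hE hB)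

theorem LearnableSmall.of_belowThreshold (hD : S.ATDyn) (hE : S.EventE) (hB : S.Bounds C₁)
    (hthr : S.BelowThreshold C₁ t) : S.LearnableSmall t := by
  induction t using Nat.strong_induction_on with
  | _ t ih =>
    have hS : ∀ s < t, S.LearnableSmall s := fun s hs => ih s hs (hthr.mono hB hs.le)
    obtain ⟨r₀, hinit, hlead⟩ := hE.exists_leading hB
    obtain ⟨n, hnt, hbelow, habove⟩ :=
      exists_crossing_index (hlead.isQuadraticGrowth hD hB).monotone S.level t
    have hn : S.IsLearningTime r₀ t n := ⟨hnt, hbelow, habove⟩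
    have heta := hn.mul_eta_le hD hE hB hthr hS hlead hinit
    have hrate := hn.sum_signalRate_le hD hE hB hthr hS hlead
    intro k hk q hq r
    have hearly := mul_rho_le_half_initAlign hD hE hB heta
      (fun s hs => hS s (hs.trans_le hnt)) hk hq r
    have hlate := mul_rho_sub_rho_le hnt hD hE hB hthr hS hrate hk hq r
    linarith

end Propagation

/-! ### Consequences of Condition (H) -/

/-- The logarithmic factor of the sparse regime. -/
def logDim (S : Setting) : ℝ := Real.log ((S.T : ℝ) * S.d * S.N * S.m * S.P / S.delta)

lemma le_div_delta (S : Setting) {a : ℝ} (ha : 0 ≤ a) : a ≤ a / S.delta :=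
  (le_div_iff₀ S.hdelta0).2 (mul_le_of_le_one_right ha S.hdelta1.le)

lemma le_log_div_delta (S : Setting) {a b : ℝ} (h : Real.exp b ≤ a) :
    b ≤ Real.log (a / S.delta) := by
  have ha : 0 < a := (Real.exp_pos b).trans_le h
  exact (Real.le_log_iff_exp_le (div_pos ha S.hdelta0)).2 (h.trans (S.le_div_delta ha.le))

lemma card_SL_add_card_SU (S : Setting) : (S.SL.card : ℝ) + S.SU.card = S.N := by
  have h := card_union_of_disjoint S.hdisj
  rw [S.hunion, card_univ, Fintype.card_fin] at h
  exact_mod_cast h.symm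

lemma card_SL_le_N (S : Setting) : (S.SL.card : ℝ) ≤ S.N := by
  linarith [S.card_SL_add_card_SU, Nat.cast_nonneg (α := ℝ) S.SU.card]

lemma card_SU_le_N (S : Setting) : (S.SU.card : ℝ) ≤ S.N := by
  linarith [S.card_SL_add_card_SU, Nat.cast_nonneg (α := ℝ) S.SL.card]

lemma pun_mul_N (S : Setting) : S.pun * S.N = S.SU.card :=
  div_mul_cancel₀ _ (Nat.cast_ne_zero.2 S.hN.ne')

lemma N_mul_one_sub_pun (S : Setting) : S.N * (1 - S.pun) = S.SL.card := by
  linarith [S.card_SL_add_card_SU, S.pun_mul_N]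

lemma SparseRegime.card_SU_le {C : ℝ} (hR : S.SparseRegime C) :
    S.SU.card ≤ C⁻¹ * Real.log S.d := by
  obtain ⟨-, hupper, -⟩ := hR
  rw [← pun_mul_N]
  exact (le_div_iff₀ (Nat.cast_pos.2 S.hN)).1 hupper

lemma SparseRegime.nonempty_SU {C : ℝ} (hC : 0 < C) (hR : S.SparseRegime C) :
    S.SU.Nonempty := by
  obtain ⟨hlower, -, -⟩ := hR
  have hN : (0 : ℝ) < S.N := Nat.cast_pos.2 S.hN
  have hpos : (0 : ℝ) < S.SU.card := by
    rw [← pun_mul_N]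
    exact mul_pos ((div_pos hC hN).trans_le hlower) hN
  exact card_pos.1 (Nat.cast_pos.1 hpos)

namespace CondH

section Logarithms

variable {C : ℝ} (hH : S.CondH C)

include hH

lemma one_le_T : (1 : ℝ) ≤ S.T := by
  obtain ⟨hC, hT, -⟩ := hH
  have := S.hN; have := S.heta; have := S.hsigma0; have := S.hsigman; have := S.hd
  have hpos : (0 : ℝ) < S.T := lt_of_lt_of_le (by positivity) hT
  exact Nat.one_le_cast.2 (Nat.cast_pos.1 hpos)

lemma T_pos : 0 < S.T := Nat.cast_pos.1 (zero_lt_one.trans_le hH.one_le_T)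

lemma logHorizon_le_logDim : S.logHorizon ≤ S.logDim := by
  have hT := hH.T_pos
  have := S.hN; have := S.hm; have := S.hP; have := S.hdelta0
  have hd : (1 : ℝ) ≤ S.d := Nat.one_le_cast.2 S.hd
  have hle : (S.T : ℝ) * 1 * S.N * S.m * S.P ≤ S.T * S.d * S.N * S.m * S.P := by gcongr
  rw [mul_one] at hle
  unfold logHorizon logDim
  gcongr

lemma log_d_le_logDim : Real.log S.d ≤ S.logDim := by
  have := hH.T_pos; have := S.hd; have := S.hN; have := S.hm; have := S.hP
  refine S.le_log_div_delta ?_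
  rw [Real.exp_log (by positivity)]
  exact_mod_cast Nat.le_of_dvd (by positivity) ⟨S.T * S.N * S.m * S.P, by ring⟩

lemma log_two_le_logDim : Real.log 2 ≤ S.logDim := by
  have := hH.T_pos; have := S.hd; have := S.hN; have := S.hm
  obtain ⟨-, -, -, -, -, -, -, -, -, -, hP, -⟩ := hH
  refine S.le_log_div_delta ?_
  rw [Real.exp_log two_pos]
  exact_mod_cast hP.trans (Nat.le_mul_of_pos_left _ (by positivity))

lemma logInit_le_add : S.logInit ≤ Real.log 16 + S.logHorizon := by
  have hT := hH.one_le_T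
  have := hH.T_pos; have := S.hN; have := S.hm; have := S.hP; have := S.hdelta0
  have hle : (16 : ℝ) * S.N * S.m * S.P ≤ 16 * (S.T * S.N * S.m * S.P) := by
    have : (1 : ℝ) * S.N * S.m * S.P ≤ S.T * S.N * S.m * S.P := by gcongr
    linarith
  rw [logInit, logHorizon, ← Real.log_mul (by norm_num) (by positivity), ← mul_div_assoc]
  gcongr

lemma log_patch_pairs_le :
    Real.log ((16 : ℝ) * S.N ^ 2 * S.P ^ 2 / S.delta) ≤ Real.log 16 + 2 * S.logHorizon := by
  have hT := hH.one_le_T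
  have := hH.T_pos; have := S.hN; have := S.hm; have := S.hP; have := S.hdelta0
  have hm : (1 : ℝ) ≤ S.m := Nat.one_le_cast.2 S.hm
  have hNP : (S.N : ℝ) * S.P ≤ S.T * S.N * S.m * S.P := by
    have : (1 : ℝ) * S.N * 1 * S.P ≤ S.T * S.N * S.m * S.P := by gcongr
    linarith
  have hδ : S.delta ^ 2 ≤ S.delta := pow_le_of_le_one S.hdelta0.le S.hdelta1.le two_ne_zero
  calc Real.log ((16 : ℝ) * S.N ^ 2 * S.P ^ 2 / S.delta)
      = Real.log (16 * ((S.N : ℝ) * S.P) ^ 2 / S.delta) := by ring_nf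
    _ ≤ Real.log (16 * ((S.T : ℝ) * S.N * S.m * S.P) ^ 2 / S.delta ^ 2) := by gcongr
    _ = Real.log 16 + 2 * S.logHorizon := by
        rw [mul_div_assoc, ← div_pow, Real.log_mul (by norm_num) (by positivity), Real.log_pow,
          logHorizon, Nat.cast_ofNat]

end Logarithms

section Bounds

variable {C : ℝ} (hH : S.CondH C) (hR : S.SparseRegime C) (hC : 10 ^ 12 ≤ C)

include hH hR hC

lemma mul_logDim_le_N : 10 * S.logDim ≤ S.N := by
  obtain ⟨-, -, hN⟩ := hR
  have hm : (1 : ℝ) ≤ S.m := Nat.one_le_cast.2 S.hm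
  have hP : (1 : ℝ) ≤ S.P := Nat.one_le_cast.2 S.hP
  have hlog : 0 ≤ S.logDim := (Real.log_nonneg one_le_two).trans hH.log_two_le_logDim
  calc 10 * S.logDim = 10 * 1 * 1 * S.logDim := by ring
    _ ≤ C * S.m * S.P * S.logDim := by
        gcongr
        linarith
    _ ≤ S.N := hN

lemma exp_one_le_N : Real.exp 1 ≤ S.N := by
  linarith [hH.mul_logDim_le_N hR hC, hH.log_two_le_logDim, Real.log_two_gt_d9,
    Real.exp_one_lt_d9]

lemma one_le_logHorizon : 1 ≤ S.logHorizon := by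
  have := hH.T_pos; have := S.hN; have := S.hm; have := S.hP
  refine S.le_log_div_delta ((hH.exp_one_le_N hR hC).trans ?_)
  exact_mod_cast Nat.le_of_dvd (by positivity) ⟨S.T * S.m * S.P, by ring⟩

lemma one_le_logInit : 1 ≤ S.logInit := by
  have := S.hN; have := S.hm; have := S.hP
  refine S.le_log_div_delta ((hH.exp_one_le_N hR hC).trans ?_)
  exact_mod_cast Nat.le_of_dvd (by positivity) ⟨16 * S.m * S.P, by ring⟩

lemma logInit_le : S.logInit ≤ 5 * S.logHorizon := by
  linarith [hH.logInit_le_add, hH.one_le_logHorizon hR hC, log_sixteen_lt]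

lemma one_le_logDim : 1 ≤ S.logDim :=
  (hH.one_le_logHorizon hR hC).trans hH.logHorizon_le_logDim

lemma sqrt_logHorizon_le : Real.sqrt S.logHorizon ≤ S.logHorizon := by
  have hL := hH.one_le_logHorizon hR hC
  exact (Real.sqrt_le_left (by linarith)).2 (le_self_pow₀ hL two_ne_zero)

lemma N_le : (S.N : ℝ) ≤ 2 * S.SL.card := by
  have hd : 0 ≤ Real.log S.d := Real.log_natCast_nonneg _
  have hSU : (S.SU.card : ℝ) ≤ Real.log S.d :=
    hR.card_SU_le.trans (mul_le_of_le_one_left hd (inv_le_one_of_one_le₀ (by linarith)))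
  linarith [hH.mul_logDim_le_N hR hC, hH.log_d_le_logDim, S.card_SL_add_card_SU]

lemma P_mul_card_SU_le : S.P * S.SU.card ≤ Real.log S.d := by
  obtain ⟨-, -, -, -, -, -, -, -, -, -, -, hP⟩ := hH
  have hCpos : 0 < C := by linarith
  calc (S.P : ℝ) * S.SU.card ≤ C * (C⁻¹ * Real.log S.d) := by
        gcongr
        exact hR.card_SU_le
    _ = Real.log S.d := mul_inv_cancel_left₀ hCpos.ne' _

end Bounds

section Scales

variable {C₁ C : ℝ}

lemma mul_le_sqrt_d (hH : S.CondH C) {K : ℝ} (hK : K ^ 2 ≤ C) :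
    K * (S.m * S.P * S.N * S.logHorizon ^ 2) ≤ Real.sqrt S.d := by
  obtain ⟨-, -, hd, -⟩ := hH
  refine Real.le_sqrt_of_sq_le (le_trans ?_ hd)
  calc (K * (S.m * S.P * S.N * S.logHorizon ^ 2)) ^ 2
      = K ^ 2 * S.m ^ 2 * S.P ^ 2 * S.N ^ 2 * S.logHorizon ^ 4 := by ring
    _ ≤ C * S.m ^ 2 * S.P ^ 2 * S.N ^ 2 * S.logHorizon ^ 4 := by gcongr

variable (hH : S.CondH C) (hR : S.SparseRegime C)

section Fields

variable (hC : 10 ^ 12 ≤ C)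

include hH hR hC

lemma m_mul_N_le_sqrt_d : (S.m : ℝ) * S.N ≤ Real.sqrt S.d := by
  have hL := hH.one_le_logHorizon hR hC
  have hP : (1 : ℝ) ≤ S.P := Nat.one_le_cast.2 S.hP
  calc (S.m : ℝ) * S.N = 1 * (S.m * 1 * S.N * 1 ^ 2) := by ring
    _ ≤ 1 * (S.m * S.P * S.N * S.logHorizon ^ 2) := by gcongr
    _ ≤ Real.sqrt S.d := hH.mul_le_sqrt_d (by linarith)

lemma P_mul_N_mul_logHorizon_le {K : ℝ} (hK₀ : 0 ≤ K) (hK : K ^ 2 ≤ C) :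
    K * (S.P * S.N * S.logHorizon) ≤ Real.sqrt S.d := by
  have hL := hH.one_le_logHorizon hR hC
  have hm : (1 : ℝ) ≤ S.m := Nat.one_le_cast.2 S.hm
  calc K * (S.P * S.N * S.logHorizon)
      = K * (1 * S.P * S.N * S.logHorizon) := by ring
    _ ≤ K * (S.m * S.P * S.N * S.logHorizon ^ 2) := by
        gcongr
        exact le_self_pow₀ hL two_ne_zero
    _ ≤ Real.sqrt S.d := hH.mul_le_sqrt_d hK

lemma overlap_mul_sqrt_d_le :
    S.overlap * Real.sqrt S.d ≤ 9 / 2 * Real.sqrt S.logHorizon := by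
  have hL := hH.one_le_logHorizon hR hC
  have hd : Real.sqrt S.d ≠ 0 := (Real.sqrt_pos.2 (Nat.cast_pos.2 S.hd)).ne'
  have hsqrt : Real.sqrt (Real.log ((16 : ℝ) * S.N ^ 2 * S.P ^ 2 / S.delta)) ≤
      9 / 4 * Real.sqrt S.logHorizon := by
    rw [Real.sqrt_le_left (by positivity), mul_pow, Real.sq_sqrt (by linarith)]
    linarith [hH.log_patch_pairs_le, log_sixteen_lt]
  rw [overlap, div_mul_cancel₀ _ hd]
  linarith

lemma crosstalk_mul_sqrt_d_le :
    S.crosstalk * Real.sqrt S.d ≤ 270 * S.logHorizon * (S.P * S.SU.card) := by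
  have hL := hH.one_le_logHorizon hR hC
  have hoverlap := hH.overlap_mul_sqrt_d_le hR hC
  calc S.crosstalk * Real.sqrt S.d
      = S.overlap * Real.sqrt S.d * (S.SU.card * S.P * (60 * Real.sqrt S.logHorizon)) := by
        rw [crosstalk]; ring
    _ ≤ 9 / 2 * Real.sqrt S.logHorizon *
          (S.SU.card * S.P * (60 * Real.sqrt S.logHorizon)) := by gcongr
    _ = 270 * Real.sqrt S.logHorizon ^ 2 * (S.P * S.SU.card) := by ring
    _ = 270 * S.logHorizon * (S.P * S.SU.card) := by rw [Real.sq_sqrt (by linarith)]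

lemma signal_strength :
    C * S.noiseNorm * S.logHorizon ≤ S.alpha * (S.SL.card : ℝ) ^ ((1 : ℝ) / 3) := by
  have hN : (0 : ℝ) < S.N := Nat.cast_pos.2 S.hN
  have hpos : 0 < (S.SL.card : ℝ) ^ ((1 : ℝ) / 3) :=
    Real.rpow_pos_of_pos (by linarith [hH.N_le hR hC]) _
  obtain ⟨-, -, -, hα, -⟩ := hH
  rw [N_mul_one_sub_pun, div_le_iff₀ hpos] at hα
  rwa [noiseNorm, ← mul_assoc]

lemma mul_noiseNorm_sq_le {c : ℝ}
    (hc : c * ((S.SL.card : ℝ) ^ ((1 : ℝ) / 3)) ^ 2 ≤ C ^ 2 * S.logHorizon ^ 2) :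
    c * S.noiseNorm ^ 2 ≤ S.alpha ^ 2 := by
  have hL := hH.one_le_logHorizon hR hC
  have hQ := S.noiseNorm_pos
  have hN : (0 : ℝ) < S.N := Nat.cast_pos.2 S.hN
  have hpos : 0 < (S.SL.card : ℝ) ^ ((1 : ℝ) / 3) :=
    Real.rpow_pos_of_pos (by linarith [hH.N_le hR hC]) _
  have hsignal := hH.signal_strength hR hC
  refine le_of_mul_le_mul_right ?_ (pow_pos hpos 2)
  calc c * S.noiseNorm ^ 2 * ((S.SL.card : ℝ) ^ ((1 : ℝ) / 3)) ^ 2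
      = c * ((S.SL.card : ℝ) ^ ((1 : ℝ) / 3)) ^ 2 * S.noiseNorm ^ 2 := by ring
    _ ≤ C ^ 2 * S.logHorizon ^ 2 * S.noiseNorm ^ 2 := by gcongr
    _ = (C * S.noiseNorm * S.logHorizon) ^ 2 := by ring
    _ ≤ (S.alpha * (S.SL.card : ℝ) ^ ((1 : ℝ) / 3)) ^ 2 := by gcongr
    _ = S.alpha ^ 2 * ((S.SL.card : ℝ) ^ ((1 : ℝ) / 3)) ^ 2 := mul_pow _ _ _

lemma noiseNorm_pow_le : 10 ^ 9 * S.logHorizon ^ 2 * S.noiseNorm ^ 3 ≤ S.N * S.alpha ^ 3 := by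
  have hL := hH.one_le_logHorizon hR hC
  have hQ := S.noiseNorm_pos
  have hα := S.halpha
  have hsignal := hH.signal_strength hR hC
  have hcard := S.card_SL_le_N
  have hC3 : 10 ^ 9 ≤ C ^ 3 :=
    (show (10 : ℝ) ^ 9 ≤ (10 ^ 12) ^ 3 by norm_num).trans (by gcongr)
  calc 10 ^ 9 * S.logHorizon ^ 2 * S.noiseNorm ^ 3
      ≤ C ^ 3 * S.logHorizon ^ 3 * S.noiseNorm ^ 3 := by
        gcongr
        norm_num
    _ = (C * S.noiseNorm * S.logHorizon) ^ 3 := by ring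
    _ ≤ (S.alpha * (S.SL.card : ℝ) ^ ((1 : ℝ) / 3)) ^ 3 := by gcongr
    _ = S.SL.card * S.alpha ^ 3 := by
        rw [mul_pow, rpow_third_pow_three (Nat.cast_nonneg _), mul_comm]
    _ ≤ S.N * S.alpha ^ 3 := by gcongr

lemma overlap_le : S.overlap * S.N * S.P ≤ 1 / 1000 := by
  have hoverlap := hH.overlap_mul_sqrt_d_le hR hC
  have hsqrt := hH.sqrt_logHorizon_le hR hC
  refine le_of_mul_le_mul_right ?_ (Real.sqrt_pos.2 (Nat.cast_pos.2 S.hd))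
  calc S.overlap * S.N * S.P * Real.sqrt S.d
      = S.overlap * Real.sqrt S.d * (S.N * S.P) := by ring
    _ ≤ 9 / 2 * Real.sqrt S.logHorizon * (S.N * S.P) := by gcongr
    _ ≤ 9 / 2 * S.logHorizon * (S.N * S.P) := by gcongr
    _ ≤ 1 / 1000 * Real.sqrt S.d := by
        linarith [hH.P_mul_N_mul_logHorizon_le hR hC (K := 4500) (by norm_num) (by linarith)]

lemma mul_initAlign_le_one : S.m * S.N * S.initAlign ≤ 1 := by
  have hm : (1 : ℝ) ≤ S.m := Nat.one_le_cast.2 S.hm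
  have hP : (1 : ℝ) ≤ S.P := Nat.one_le_cast.2 S.hP
  have hlog := hH.one_le_logDim hR hC
  have hσ := S.hsigma0
  have hσn := S.hsigman
  have hd := S.hd
  have hι := S.initAlign_pos
  have hmN := hH.m_mul_N_le_sqrt_d hR hC
  obtain ⟨-, -, -, -, hinit, -⟩ := hH
  calc S.m * S.N * S.initAlign ≤ Real.sqrt S.d * S.initAlign := by gcongr
    _ = S.sigma0 * (S.sigman * 1 ^ 2 * 1 * Real.sqrt S.d ^ 2) * 1 := by
        rw [initAlign, noiseNorm]; ring
    _ ≤ S.sigma0 * (S.sigman * S.m ^ 2 * Real.sqrt S.P * S.d) * S.logDim := by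
        rw [Real.sq_sqrt (Nat.cast_nonneg _)]
        gcongr
        exact Real.one_le_sqrt.2 hP
    _ ≤ 1 / 1 := mul_mul_le_one_div (by positivity) (by linarith) (min_le_right _ _) one_pos
        (by linarith) hinit
    _ = 1 := div_one 1

lemma initAlign_mul_sq_le : 4096 * (S.m : ℝ) ^ ((1 : ℝ) / 3) * S.logHorizon * S.initAlign *
    S.noiseNorm ^ 2 ≤ S.alpha ^ 2 := by
  have hm : (1 : ℝ) ≤ S.m := Nat.one_le_cast.2 S.hm
  have hN : (1 : ℝ) ≤ S.N := Nat.one_le_cast.2 S.hN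
  have hL := hH.one_le_logHorizon hR hC
  have hι := S.initAlign_pos
  have hC2 : 4096 ≤ C ^ 2 := (show (4096 : ℝ) ≤ (10 ^ 12) ^ 2 by norm_num).trans (by gcongr)
  refine hH.mul_noiseNorm_sq_le hR hC ?_
  have hcard : ((S.SL.card : ℝ) ^ ((1 : ℝ) / 3)) ^ 2 ≤ S.N := by
    have := S.card_SL_le_N
    exact le_trans (by gcongr) (rpow_third_sq_le hN)
  calc 4096 * (S.m : ℝ) ^ ((1 : ℝ) / 3) * S.logHorizon * S.initAlign *
        ((S.SL.card : ℝ) ^ ((1 : ℝ) / 3)) ^ 2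
      ≤ 4096 * S.m * S.logHorizon * S.initAlign * S.N := by
        gcongr
        exact Real.rpow_le_self_of_one_le hm (by norm_num)
    _ = 4096 * S.logHorizon * (S.m * S.N * S.initAlign) := by ring
    _ ≤ 4096 * S.logHorizon ^ 2 * 1 := by
        gcongr
        · exact le_self_pow₀ hL two_ne_zero
        · exact hH.mul_initAlign_le_one hR hC
    _ ≤ C ^ 2 * S.logHorizon ^ 2 := by
        rw [mul_one]
        gcongr

lemma initAlign_le :
    ((S.m : ℝ) * S.P) ^ ((1 : ℝ) / 3) * (Real.sqrt S.logHorizon * S.initAlign) ≤ 1 / 16 := by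
  have hm : (1 : ℝ) ≤ S.m := Nat.one_le_cast.2 S.hm
  have hP : (1 : ℝ) ≤ S.P := Nat.one_le_cast.2 S.hP
  have hlog := hH.one_le_logDim hR hC
  have hLD := (hH.sqrt_logHorizon_le hR hC).trans hH.logHorizon_le_logDim
  have hσ := S.hsigma0
  have hσn := S.hsigman
  have hd := S.hd
  obtain ⟨-, -, -, -, hinit, -⟩ := hH
  calc ((S.m : ℝ) * S.P) ^ ((1 : ℝ) / 3) * (Real.sqrt S.logHorizon * S.initAlign)
      = S.sigma0 * ((S.m : ℝ) ^ ((1 : ℝ) / 3) * (S.P : ℝ) ^ ((1 : ℝ) / 3) * S.sigman *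
          Real.sqrt S.d) * Real.sqrt S.logHorizon := by
        rw [Real.mul_rpow (by positivity) (by positivity), initAlign, noiseNorm]; ring
    _ ≤ S.sigma0 * ((S.m : ℝ) ^ ((2 : ℝ) / 3) * (S.P : ℝ) ^ ((2 : ℝ) / 3) * S.sigman *
          Real.sqrt S.d) * S.logDim := by
        gcongr
        all_goals norm_num
    _ ≤ 1 / 16 := mul_mul_le_one_div (by positivity) (by linarith)
        ((min_le_left _ _).trans (min_le_left _ _)) (by norm_num) (by linarith) hinit

lemma alpha_mul_sigma0_le :
    (S.m : ℝ) ^ ((1 : ℝ) / 3) * (S.alpha * (S.sigma0 * S.logHorizon)) ≤ 1 / 10 := by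
  have hm : (1 : ℝ) ≤ S.m := Nat.one_le_cast.2 S.hm
  have hL := hH.one_le_logHorizon hR hC
  have hlog := hH.one_le_logDim hR hC
  have hLD := hH.logHorizon_le_logDim
  have hσ := S.hsigma0
  have hα := S.halpha
  obtain ⟨-, -, -, -, hinit, -⟩ := hH
  calc (S.m : ℝ) ^ ((1 : ℝ) / 3) * (S.alpha * (S.sigma0 * S.logHorizon))
      = S.sigma0 * (S.alpha * (S.m : ℝ) ^ ((1 : ℝ) / 3)) * S.logHorizon := by ring
    _ ≤ S.sigma0 * (S.alpha * (S.m : ℝ) ^ ((2 : ℝ) / 3)) * S.logDim := by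
        gcongr
        norm_num
    _ ≤ 1 / 10 := mul_mul_le_one_div (by positivity) (by linarith)
        ((min_le_left _ _).trans (min_le_right _ _)) (by norm_num) (by linarith) hinit

lemma eta_mul_alpha_sq_le : 50 * (S.eta * S.alpha ^ 2) ≤ 1 := by
  have hL := hH.one_le_logHorizon hR hC
  have hα := S.halpha
  have hη := S.heta
  obtain ⟨-, -, -, -, -, hrate, -⟩ := hH
  have hle : S.eta * S.alpha ^ 2 * S.logHorizon ≤ 1 / 50 :=
    mul_mul_le_one_div (by positivity) (by linarith) (min_le_right _ _) (by norm_num)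
      (by linarith) hrate
  linarith [le_mul_of_one_le_right (by positivity : 0 ≤ S.eta * S.alpha ^ 2) hL]

lemma eta_mul_sigma0_le : 25 * (S.eta * S.alpha ^ 3 * (S.sigma0 * S.logHorizon)) ≤ 1 := by
  have hL := hH.one_le_logHorizon hR hC
  have hα := S.halpha
  have hσ := S.hsigma0
  obtain ⟨-, -, -, -, -, hrate, -⟩ := hH
  have hle : S.eta * (S.alpha ^ 3 * S.sigma0) * S.logHorizon ≤ 1 / 25 :=
    mul_mul_le_one_div (by positivity) (by linarith) ((min_le_left _ _).trans (min_le_left _ _))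
      (by norm_num) (by linarith) hrate
  linarith

end Fields

lemma eps_le (hH : S.CondH C) (hC : 2 ≤ C) : S.eps ≤ S.alpha / 2 := by
  obtain ⟨-, -, -, -, -, -, -, heps, -⟩ := hH
  calc S.eps ≤ C⁻¹ * S.alpha :=
        heps.le.trans (by gcongr; exact min_le_left _ _)
    _ ≤ 2⁻¹ * S.alpha :=
        mul_le_mul_of_nonneg_right (inv_anti₀ two_pos hC) S.halpha.le
    _ = S.alpha / 2 := by ring

section Threshold

variable (hC : 10 ^ 12 * max 1 C₁ ^ 2 ≤ C)

include hH hR hC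

lemma crosstalk_mul_max_le : S.crosstalk * max 1 C₁ ≤ 1 / 1000 := by
  have hmax : 1 ≤ max 1 C₁ := le_max_left _ _
  have hC' : 10 ^ 12 ≤ C := by nlinarith
  have hL := hH.one_le_logHorizon hR hC'
  have hcross : S.crosstalk * Real.sqrt S.d ≤ 270 * S.logHorizon * (S.P * S.N) := by
    have := S.card_SU_le_N
    exact (hH.crosstalk_mul_sqrt_d_le hR hC').trans (by gcongr)
  have hdim := hH.P_mul_N_mul_logHorizon_le hR hC' (K := 10 ^ 6 * max 1 C₁) (by positivity)
    (by linarith)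
  refine le_of_mul_le_mul_right ?_ (Real.sqrt_pos.2 (Nat.cast_pos.2 S.hd))
  calc S.crosstalk * max 1 C₁ * Real.sqrt S.d
      = S.crosstalk * Real.sqrt S.d * max 1 C₁ := by ring
    _ ≤ 270 * S.logHorizon * (S.P * S.N) * max 1 C₁ := by gcongr
    _ = 270 * (max 1 C₁ * (S.P * S.N * S.logHorizon)) := by ring
    _ ≤ 1 / 1000 * Real.sqrt S.d := by
        have hpos : 0 ≤ max 1 C₁ * (S.P * S.N * S.logHorizon) := by positivity
        linarith

lemma crosstalk_mul_sq_le :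
    512 * (S.crosstalk * max 1 C₁) * S.noiseNorm ^ 2 ≤ S.alpha ^ 2 := by
  have hmax : 1 ≤ max 1 C₁ := le_max_left _ _
  have hC' : 10 ^ 12 ≤ C := by nlinarith
  have hL := hH.one_le_logHorizon hR hC'
  have hm : (1 : ℝ) ≤ S.m := Nat.one_le_cast.2 S.hm
  have hd : (1 : ℝ) ≤ S.d := Nat.one_le_cast.2 S.hd
  have hSL : (S.SL.card : ℝ) ≤ Real.sqrt S.d := S.card_SL_le_N.trans
    ((le_mul_of_one_le_left (Nat.cast_nonneg _) hm).trans (hH.m_mul_N_le_sqrt_d hR hC'))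
  have hcross : S.crosstalk * Real.sqrt S.d ≤ 270 * S.logHorizon * Real.log S.d := by
    have := hH.P_mul_card_SU_le hR hC'
    exact (hH.crosstalk_mul_sqrt_d_le hR hC').trans (by gcongr)
  have hlog := rpow_third_sq_mul_log_le (Nat.cast_nonneg S.SL.card) hd hSL
  refine hH.mul_noiseNorm_sq_le hR hC'
    (le_of_mul_le_mul_right ?_ (Real.sqrt_pos.2 (zero_lt_one.trans_le hd)))
  calc 512 * (S.crosstalk * max 1 C₁) * ((S.SL.card : ℝ) ^ ((1 : ℝ) / 3)) ^ 2 * Real.sqrt S.d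
      = 512 * max 1 C₁ * ((S.SL.card : ℝ) ^ ((1 : ℝ) / 3)) ^ 2 *
          (S.crosstalk * Real.sqrt S.d) := by ring
    _ ≤ 512 * max 1 C₁ * ((S.SL.card : ℝ) ^ ((1 : ℝ) / 3)) ^ 2 *
          (270 * S.logHorizon * Real.log S.d) := by gcongr
    _ = 138240 * max 1 C₁ * S.logHorizon *
          (((S.SL.card : ℝ) ^ ((1 : ℝ) / 3)) ^ 2 * Real.log S.d) := by ring
    _ ≤ 138240 * max 1 C₁ * S.logHorizon * (6 * Real.sqrt S.d) := by gcongr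
    _ = 829440 * max 1 C₁ * S.logHorizon * Real.sqrt S.d := by ring
    _ ≤ C * S.logHorizon ^ 2 * Real.sqrt S.d := by
        gcongr
        · nlinarith
        · exact le_self_pow₀ hL two_ne_zero
    _ ≤ C ^ 2 * S.logHorizon ^ 2 * Real.sqrt S.d := by
        gcongr
        exact le_self_pow₀ (by linarith) two_ne_zero

lemma bounds : S.Bounds C₁ := by
  have hmax : 1 ≤ max 1 C₁ := le_max_left _ _
  have hC' : 10 ^ 12 ≤ C := by nlinarith
  have hcross : S.crosstalk * C₁ ≤ S.crosstalk * max 1 C₁ :=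
    mul_le_mul_of_nonneg_left (le_max_right _ _) S.crosstalk_nonneg
  exact
    { two_le_P := by obtain ⟨-, -, -, -, -, -, -, -, -, -, hP, -⟩ := hH; exact hP
      nonempty_SU := hR.nonempty_SU (by linarith)
      N_le := hH.N_le hR hC'
      eps_le := hH.eps_le (by linarith)
      one_le_logHorizon := hH.one_le_logHorizon hR hC'
      one_le_logInit := hH.one_le_logInit hR hC'
      logInit_le := hH.logInit_le hR hC'
      overlap_le := hH.overlap_le hR hC'
      crosstalk_le := (le_mul_of_one_le_right S.crosstalk_nonneg hmax).trans
        (hH.crosstalk_mul_max_le hR hC)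
      crosstalk_mul_le := hcross.trans (hH.crosstalk_mul_max_le hR hC)
      crosstalk_mul_sq_le := le_trans (by gcongr) (hH.crosstalk_mul_sq_le hR hC)
      noiseNorm_pow_le := hH.noiseNorm_pow_le hR hC'
      initAlign_mul_sq_le := hH.initAlign_mul_sq_le hR hC'
      initAlign_le := hH.initAlign_le hR hC'
      alpha_mul_sigma0_le := hH.alpha_mul_sigma0_le hR hC'
      eta_mul_alpha_sq_le := hH.eta_mul_alpha_sq_le hR hC'
      eta_mul_sigma0_le := hH.eta_mul_sigma0_le hR hC' }

end Threshold

end Scales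

end CondH

end Setting

theorem stmt13_general {S : Setting} {C₁ C : ℝ} (hC : 10 ^ 12 * max 1 C₁ ^ 2 ≤ C)
    (hD : S.ATDyn) (hE : S.EventE) (hH : S.CondH C) (hR : S.SparseRegime C) {t : ℕ}
    (ht : S.rhoHatMax t ≤ C₁ / (((S.m : ℝ) * S.P) ^ ((1 : ℝ) / 3) * S.sigman ^ 2 * S.d)) :
    S.rhoHatMax t + S.eta * S.sigman ^ 4 * (S.d : ℝ) ^ 2 / (3 * S.N * (1 + Real.exp (4 * C₁ ^ 3))) *
        S.rhoHatMax t ^ 2 ≤ S.rhoHatMax (t + 1) ∧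
      S.rhoHatMax (t + 1) ≤ S.rhoHatMax t + 4800 * S.eta * S.sigman ^ 4 * (S.d : ℝ) ^ 2 *
        Real.log ((16 : ℝ) * S.N * S.m * S.P / S.delta) / S.N * S.rhoHatMax t ^ 2 := by
  have hB : S.Bounds C₁ := hH.bounds hR hC
  have hthr : S.BelowThreshold C₁ t := Setting.belowThreshold_iff.2 ht
  have hsmall : S.LearnableSmall t := .of_belowThreshold hD hE hB hthr
  have hlower := hsmall.le_rhoHatMax_succ hD hE hB hthr
  have hupper := hsmall.rhoHatMax_succ_le hD hE hB
  rw [Setting.peak_sq] at hlower hupper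
  exact ⟨le_trans (by ring_nf; rfl) hlower, hupper.trans_eq (by rw [Setting.logInit]; ring)⟩

/-- Dynamics of the maximum shifted noise coefficient. On the event
`E`, under Condition (H) in the sparse-unlearnable regime, as long as
`ρ̂_max^{(t)} ≤ C₁/((mP)^{1/3} σ_n² d)`, the maximum shifted noise coefficient obeys
the stated two-sided quadratic one-step growth bounds. -/
theorem stmt13 :
    ∃ C1 C : ℝ, 0 < C1 ∧ 0 < C ∧
      ∀ S : Setting, S.ATDyn → S.EventE → S.CondH C → S.SparseRegime C →
        ∀ t : ℕ,
          S.rhoHatMax t ≤ C1 / (((S.m : ℝ) * S.P) ^ ((1 : ℝ) / 3) * S.sigman ^ 2 * S.d) →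
          S.rhoHatMax t +
              S.eta * S.sigman ^ 4 * (S.d : ℝ) ^ 2 /
                  (3 * S.N * (1 + Real.exp (4 * C1 ^ 3))) *
                (S.rhoHatMax t) ^ 2 ≤ S.rhoHatMax (t + 1) ∧
          S.rhoHatMax (t + 1) ≤
            S.rhoHatMax t +
              4800 * S.eta * S.sigman ^ 4 * (S.d : ℝ) ^ 2 *
                  Real.log ((16 : ℝ) * S.N * S.m * S.P / S.delta) / S.N *
                (S.rhoHatMax t) ^ 2 :=
  ⟨1, 10 ^ 12, one_pos, by norm_num, fun _ hD hE hH hR _ ht =>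
    stmt13_general (by norm_num) hD hE hH hR ht⟩

end AD

end
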